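/- arXiv:math/0511066 — 3 statements merged into one kernel-verified Lean document; each statement's English description precedes it below -/
import Mathlib

section
/- Let λ > 0 and let S : ℤ³ → ℂ be a kernel satisfying: S(k,m,n) = 0 whenever kmn = 0; S(k,m,n) = conj(S(−k,−m,−n)); S(k,m,n) = S(k,n,m); S(k,m,n) = S(m,n,k); S(ηk,ηm,ηn) = η^{−λ} S(k,m,n) for every positive integer η; and the bound |S(k,m,n)| ≤ C / min{|k|^λ, |m|^λ, |n|^λ} for some constant C > 0 and all k,m,n ∈ ℤ with kmn ≠ 0. Let s > max{3/2 − λ, 1/2}, let C_{s,λ} be a constant such that |k|k|^{2s} + m|m|^{2s} + n|n|^{2s}| / min{|k|^λ, |m|^λ, |n|^λ} ≤ C_{s,λ}(|k|^s|m|^s|n|^{1−λ} + |n|^s|k|^s|m|^{1−λ} + |m|^s|n|^s|k|^{1−λ}) for all nonzero real k,m,n with k+m+n = 0, and set K_{s,λ} = C·C_{s,λ}·M_{s+λ−1} where M_σ = (2 Σ_{n=1}^∞ n^{−2σ})^{1/2}. Then for every f ∈ Ḣ^s(𝕋), the initial-value problem u_t + a(u,u)_x = 0, u(·,0) = f has a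 unique solution u ∈ C(I; Ḣ^s(𝕋)) ∩ C¹(I; Ḣ^{s−1}(𝕋)) on the time interval I = (−t₊, t₊) with t₊ = 1/(K_{s,λ} ‖f‖_s). -/
open scoped BigOperators
open Filter

/-- The homogeneous Sobolev norm of order `s` of a Fourier coefficient sequence. -/
noncomputable def hnorm (s : ℝ) (u : ℤ → ℂ) : ℝ :=
  (∑' k : ℤ, |(k : ℝ)| ^ (2 * s) * ‖u k‖ ^ 2) ^ ((1 : ℝ) / 2)

/-- Membership in the homogeneous Sobolev space `Ḣ^s(𝕋)`. -/
def InHs (s : ℝ) (u : ℤ → ℂ) : Prop :=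
  u 0 = 0 ∧ (∀ k : ℤ, u (-k) = starRingEnd ℂ (u k)) ∧
    Summable fun k : ℤ => |(k : ℝ)| ^ (2 * s) * ‖u k‖ ^ 2

/-- `M_σ = (2 Σ_{n=1}^∞ n^{−2σ})^{1/2}`. -/
noncomputable def Mconst (σ : ℝ) : ℝ :=
  Real.sqrt (2 * ∑' n : ℕ, ((n : ℝ) + 1) ^ (-(2 * σ)))

/-- The Fourier coefficients of the bilinear form `a(u,v)` determined by the kernel `S`. -/
noncomputable def aHat (S : ℤ → ℤ → ℤ → ℂ) (u v : ℤ → ℂ) (k : ℤ) : ℂ :=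
  ∑' n : ℤ, S (-k) (k - n) n * u (k - n) * v n

/-- Continuity of `t ↦ u(·,t)` on `I` with values in `Ḣ^s`. -/
def HsContOn (s : ℝ) (u : ℝ → ℤ → ℂ) (I : Set ℝ) : Prop :=
  ∀ t₀ ∈ I, Tendsto (fun t => hnorm s fun k => u t k - u t₀ k) (nhdsWithin t₀ I) (nhds 0)

/-- `u` is a solution of `u_t + a(u,u)_x = 0` on the time interval `I`,
belonging to `C(I; Ḣ^s) ∩ C¹(I; Ḣ^{s-1})`. -/
def IsSolution (S : ℤ → ℤ → ℤ → ℂ) (s : ℝ) (I : Set ℝ) (u : ℝ → ℤ → ℂ) : Prop :=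
  (∀ t ∈ I, InHs s (u t)) ∧ HsContOn s u I ∧
    (∀ t ∈ I, ∀ k : ℤ, HasDerivAt (fun τ => u τ k)
      (-(Complex.I * (k : ℂ) * aHat S (u t) (u t) k)) t) ∧
    (∀ t ∈ I, InHs (s - 1) fun k => -(Complex.I * (k : ℂ) * aHat S (u t) (u t) k)) ∧
    HsContOn (s - 1) (fun t k => -(Complex.I * (k : ℂ) * aHat S (u t) (u t) k)) I

/-!
Pairing the equation with `|D|^{2s} u` gives a cubic form in `u` over the triads `k + m + n = 0`.
The cyclic symmetry of `S` replaces its symbol by one third of the cyclic sum of `k |k|^{2s}`, which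
the definition of `C_{s,λ}` bounds without loss of derivative. Hence `y = ‖u‖_s` satisfies
`|y'| ≤ K y²`, and the Riccati equation dictates the lifespan `1 / (K ‖f‖_s)`. Galerkin truncations
inherit this estimate.

The difference `w` of two solutions satisfies `w_t = -a(w, z)ₓ`, where `z` is their sum. It is
estimated in `Ḣ^{s-1}`, where exchanging the two frequencies carried by `w` leaves a commutator
that compensates the derivative. By Gronwall this gives uniqueness, and also convergence of the
Galerkin sequence, since a truncation at frequency `N` costs only `O(1/N)`. Strong continuity in
`Ḣ^s` follows by restarting the equation at each time: the Riccati bound prevents a loss of norm in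
the weak limit.
-/

/-- The series `∑ f` converges, and its sum is at most `B`. Mathlib's `tsum` of a divergent series
is `0`, so an upper bound for a sum is only meaningful together with summability. -/
structure HasSumLE {ι : Type*} (f : ι → ℝ) (B : ℝ) : Prop where
  summable : Summable f
  tsum_le : ∑' i, f i ≤ B

namespace HasSumLE

variable {ι κ : Type*} {f g a b : ι → ℝ} {A B : ℝ}

lemma of_le (hg : HasSumLE g B) (hf : ∀ i, 0 ≤ f i) (hfg : ∀ i, f i ≤ g i) : HasSumLE f B :=
  have hsum := Summable.of_nonneg_of_le hf hfg hg.summable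
  ⟨hsum, (hsum.tsum_le_tsum hfg hg.summable).trans hg.tsum_le⟩

lemma trans_le (hf : HasSumLE f A) (h : A ≤ B) : HasSumLE f B :=
  ⟨hf.summable, hf.tsum_le.trans h⟩

lemma add (hf : HasSumLE f A) (hg : HasSumLE g B) : HasSumLE (fun i => f i + g i) (A + B) :=
  ⟨hf.summable.add hg.summable,
    (hf.summable.tsum_add hg.summable).trans_le (add_le_add hf.tsum_le hg.tsum_le)⟩

lemma const_mul (hf : HasSumLE f B) {c : ℝ} (hc : 0 ≤ c) : HasSumLE (fun i => c * f i) (c * B) :=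
  ⟨hf.summable.mul_left c, tsum_mul_left.trans_le (mul_le_mul_of_nonneg_left hf.tsum_le hc)⟩

lemma mul_const (hf : HasSumLE f B) {c : ℝ} (hc : 0 ≤ c) : HasSumLE (fun i => f i * c) (B * c) :=
  ⟨hf.summable.mul_right c, tsum_mul_right.trans_le (mul_le_mul_of_nonneg_right hf.tsum_le hc)⟩

lemma comp_equiv (hf : HasSumLE f B) (e : κ ≃ ι) : HasSumLE (fun j => f (e j)) B :=
  ⟨e.summable_iff.2 hf.summable, (e.tsum_eq f).trans_le hf.tsum_le⟩

lemma norm_tsum_le {E : Type*} [NormedAddCommGroup E] [CompleteSpace E] {u : ι → E}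
    (hf : HasSumLE f B) (hu : ∀ i, ‖u i‖ ≤ f i) : ‖∑' i, u i‖ ≤ B :=
  (tsum_of_norm_bounded hf.summable.hasSum hu).trans hf.tsum_le

lemma prod {F : ι × κ → ℝ} (hF : ∀ p, 0 ≤ F p) (hfib : ∀ i, HasSumLE (fun j => F (i, j)) (f i))
    (hf : HasSumLE f B) : HasSumLE F B := by
  have htsum : HasSumLE (fun i => ∑' j, F (i, j)) B :=
    hf.of_le (fun i => tsum_nonneg fun j => hF _) fun i => (hfib i).tsum_le
  have hsum : Summable F :=
    (summable_prod_of_nonneg hF).2 ⟨fun i => (hfib i).summable, htsum.summable⟩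
  exact ⟨hsum, hsum.tsum_prod.trans_le htsum.tsum_le⟩

lemma tsum_prod {F : ι × κ → ℝ} (hF : HasSumLE F B) : HasSumLE (fun i => ∑' j, F (i, j)) B :=
  ⟨hF.summable.prod, hF.summable.tsum_prod.symm.trans_le hF.tsum_le⟩

lemma mul_of_sq (ha : HasSumLE (fun i => a i ^ 2) (A ^ 2))
    (hb : HasSumLE (fun i => b i ^ 2) (B ^ 2)) (hA : 0 ≤ A) (hB : 0 ≤ B)
    (ha₀ : ∀ i, 0 ≤ a i) (hb₀ : ∀ i, 0 ≤ b i) :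
    HasSumLE (fun i => a i * b i) (A * B) := by
  obtain ⟨hsum, hle⟩ := Real.summable_and_inner_le_Lp_mul_Lq_tsum_of_nonneg
    Real.HolderConjugate.two_two ha₀ hb₀ (by simpa using ha.summable) (by simpa using hb.summable)
  simp only [Real.rpow_ofNat, ← Real.sqrt_eq_rpow] at hle
  exact ⟨hsum, hle.trans (mul_le_mul (Real.sqrt_le_iff.2 ⟨hA, ha.tsum_le⟩)
    (Real.sqrt_le_iff.2 ⟨hB, hb.tsum_le⟩) (Real.sqrt_nonneg _) hA)⟩

lemma add_sq (ha : HasSumLE (fun i => a i ^ 2) (A ^ 2)) (hb : HasSumLE (fun i => b i ^ 2) (B ^ 2))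
    (hA : 0 ≤ A) (hB : 0 ≤ B) (ha₀ : ∀ i, 0 ≤ a i) (hb₀ : ∀ i, 0 ≤ b i) :
    HasSumLE (fun i => (a i + b i) ^ 2) ((A + B) ^ 2) := by
  simpa only [add_pow_two, mul_assoc] using
    (ha.add ((ha.mul_of_sq hb hA hB ha₀ hb₀).const_mul zero_le_two)).add hb

end HasSumLE

section Convolution

variable {a b c : ℤ → ℝ} {A B Γ : ℝ}

lemma HasSumLE.comp_sub_right (ha : HasSumLE a A) (n : ℤ) : HasSumLE (fun k => a (k - n)) A :=
  ha.comp_equiv (Equiv.subRight n)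

lemma hasSumLE_mul_mul_sub (ha : HasSumLE (fun k => a k ^ 2) (A ^ 2))
    (hb : HasSumLE (fun k => b k ^ 2) (B ^ 2)) (hc : HasSumLE c Γ) (hA : 0 ≤ A) (hB : 0 ≤ B)
    (ha₀ : ∀ k, 0 ≤ a k) (hb₀ : ∀ k, 0 ≤ b k) (hc₀ : ∀ k, 0 ≤ c k) :
    HasSumLE (fun p : ℤ × ℤ => a p.1 * b (p.1 - p.2) * c p.2) (A * B * Γ) := by
  have hfib (n : ℤ) : HasSumLE (fun k => a k * b (k - n) * c n) (A * B * c n) :=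
    (ha.mul_of_sq (hb.comp_sub_right n) hA hB ha₀ fun k => hb₀ _).mul_const (hc₀ n)
  exact (HasSumLE.prod (F := fun p : ℤ × ℤ => a p.2 * b (p.2 - p.1) * c p.1)
    (fun p => mul_nonneg (mul_nonneg (ha₀ _) (hb₀ _)) (hc₀ _)) hfib
    (hc.const_mul (mul_nonneg hA hB))).comp_equiv (Equiv.prodComm ℤ ℤ)

lemma HasSumLE.convolution_sq (ha : HasSumLE (fun k => a k ^ 2) (A ^ 2)) (hc : HasSumLE c Γ)
    (ha₀ : ∀ k, 0 ≤ a k) (hc₀ : ∀ k, 0 ≤ c k) :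
    (∀ k, Summable fun n => a (k - n) * c n) ∧
      HasSumLE (fun k => (∑' n, a (k - n) * c n) ^ 2) ((A * Γ) ^ 2) := by
  have hΓ : 0 ≤ Γ := (tsum_nonneg hc₀).trans hc.tsum_le
  have hprod : HasSumLE (fun p : ℤ × ℤ => a (p.1 - p.2) ^ 2 * c p.2) (A ^ 2 * Γ) :=
    (HasSumLE.prod (F := fun p : ℤ × ℤ => a (p.2 - p.1) ^ 2 * c p.1)
      (fun p => mul_nonneg (sq_nonneg _) (hc₀ _))
      (fun n => (ha.comp_sub_right n).mul_const (hc₀ n))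
      (hc.const_mul (sq_nonneg A))).comp_equiv (Equiv.prodComm ℤ ℤ)
  have hfib₀ (k : ℤ) : 0 ≤ ∑' n, a (k - n) ^ 2 * c n :=
    tsum_nonneg fun n => mul_nonneg (sq_nonneg _) (hc₀ n)
  have hfib (k : ℤ) : HasSumLE (fun n => a (k - n) * c n)
      (√(∑' n, a (k - n) ^ 2 * c n) * √Γ) := by
    have := HasSumLE.mul_of_sq (a := fun n => a (k - n) * √(c n)) (b := fun n => √(c n))
      (A := √(∑' n, a (k - n) ^ 2 * c n)) (B := √Γ)
      (by simpa only [mul_pow, Real.sq_sqrt (hc₀ _), Real.sq_sqrt (hfib₀ k)]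
        using ⟨hprod.summable.prod_factor k, le_rfl⟩)
      (by simpa only [Real.sq_sqrt (hc₀ _), Real.sq_sqrt hΓ] using hc)
      (Real.sqrt_nonneg _) (Real.sqrt_nonneg _)
      (fun n => mul_nonneg (ha₀ _) (Real.sqrt_nonneg _)) fun n => Real.sqrt_nonneg _
    simpa only [mul_assoc, Real.mul_self_sqrt (hc₀ _)] using this
  refine ⟨fun k => (hfib k).summable, ?_⟩
  have hsum := hprod.tsum_prod.mul_const hΓ
  rw [show A ^ 2 * Γ * Γ = (A * Γ) ^ 2 by ring] at hsum
  refine hsum.of_le (fun k => sq_nonneg _) fun k => ?_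
  calc (∑' n, a (k - n) * c n) ^ 2 ≤ (√(∑' n, a (k - n) ^ 2 * c n) * √Γ) ^ 2 :=
        pow_le_pow_left₀ (tsum_nonneg fun n => mul_nonneg (ha₀ _) (hc₀ n)) (hfib k).tsum_le 2
    _ = (∑' n, a (k - n) ^ 2 * c n) * Γ := by
        rw [mul_pow, Real.sq_sqrt (hfib₀ k), Real.sq_sqrt hΓ]

end Convolution

/-! ### Sobolev spaces of coefficient sequences -/

lemma one_le_abs_intCast {k : ℤ} (hk : k ≠ 0) : (1 : ℝ) ≤ |(k : ℝ)| := by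
  exact_mod_cast Int.one_le_abs hk

lemma abs_intCast_pos {k : ℤ} (hk : k ≠ 0) : (0 : ℝ) < |(k : ℝ)| :=
  abs_pos.2 (Int.cast_ne_zero.2 hk)

/-- The modulus of the `k`-th Fourier coefficient with the Sobolev weight of order `ρ`: the numbers
whose `ℓ²` norm is `hnorm ρ u`. -/
noncomputable def wcoeff (ρ : ℝ) (u : ℤ → ℂ) (k : ℤ) : ℝ := |(k : ℝ)| ^ ρ * ‖u k‖

section Sobolev

variable {ρ σ s B : ℝ} {u v : ℤ → ℂ}

lemma wcoeff_nonneg (ρ : ℝ) (u : ℤ → ℂ) (k : ℤ) : 0 ≤ wcoeff ρ u k :=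
  mul_nonneg (Real.rpow_nonneg (abs_nonneg _) _) (norm_nonneg _)

lemma wcoeff_order_zero (u : ℤ → ℂ) : wcoeff 0 u = fun k => ‖u k‖ := by
  simp only [funext_iff, wcoeff, Real.rpow_zero, one_mul, implies_true]

lemma wcoeff_sq (ρ : ℝ) (u : ℤ → ℂ) (k : ℤ) :
    wcoeff ρ u k ^ 2 = |(k : ℝ)| ^ (2 * ρ) * ‖u k‖ ^ 2 := by
  rw [wcoeff, mul_pow, ← Real.rpow_mul_natCast (abs_nonneg _), mul_comm ρ, Nat.cast_ofNat]

lemma wcoeff_add_le (ρ : ℝ) (u v : ℤ → ℂ) (k : ℤ) :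
    wcoeff ρ (u + v) k ≤ wcoeff ρ u k + wcoeff ρ v k := by
  rw [wcoeff, wcoeff, wcoeff, ← mul_add]
  exact mul_le_mul_of_nonneg_left (norm_add_le _ _) (Real.rpow_nonneg (abs_nonneg _) _)

lemma wcoeff_neg (ρ : ℝ) (u : ℤ → ℂ) (k : ℤ) : wcoeff ρ (-u) k = wcoeff ρ u k := by
  rw [wcoeff, wcoeff, Pi.neg_apply, norm_neg]

lemma wcoeff_mono (h : ρ ≤ σ) (hu : u 0 = 0) (k : ℤ) : wcoeff ρ u k ≤ wcoeff σ u k := by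
  rcases eq_or_ne k 0 with rfl | hk
  · simp only [wcoeff, hu, norm_zero, mul_zero, le_refl]
  · exact mul_le_mul_of_nonneg_right
      (Real.rpow_le_rpow_of_exponent_le (one_le_abs_intCast hk) h) (norm_nonneg _)

lemma rpow_mul_wcoeff (hu : u 0 = 0) (k : ℤ) :
    |(k : ℝ)| ^ σ * wcoeff ρ u k = wcoeff (σ + ρ) u k := by
  rcases eq_or_ne k 0 with rfl | hk
  · simp only [wcoeff, hu, norm_zero, mul_zero]
  · rw [wcoeff, wcoeff, ← mul_assoc, Real.rpow_add (abs_intCast_pos hk)]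

lemma hnorm_nonneg (ρ : ℝ) (u : ℤ → ℂ) : 0 ≤ hnorm ρ u :=
  Real.rpow_nonneg (tsum_nonneg fun _ => by positivity) _

lemma hnorm_sq (ρ : ℝ) (u : ℤ → ℂ) : hnorm ρ u ^ 2 = ∑' k, wcoeff ρ u k ^ 2 := by
  simp only [hnorm, ← Real.sqrt_eq_rpow, wcoeff_sq]
  exact Real.sq_sqrt (tsum_nonneg fun _ => by positivity)

lemma hnorm_neg (ρ : ℝ) (u : ℤ → ℂ) : hnorm ρ (-u) = hnorm ρ u := by
  simp only [hnorm, Pi.neg_apply, norm_neg]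

lemma hnorm_le_of_hasSumLE (h : HasSumLE (fun k => wcoeff ρ u k ^ 2) (B ^ 2)) (hB : 0 ≤ B) :
    hnorm ρ u ≤ B :=
  abs_le_of_sq_le_sq' ((hnorm_sq ρ u).trans_le h.tsum_le) hB |>.2

lemma inHs_iff_summable_wcoeff_sq : InHs ρ u ↔
    u 0 = 0 ∧ (∀ k : ℤ, u (-k) = starRingEnd ℂ (u k)) ∧ Summable fun k => wcoeff ρ u k ^ 2 := by
  simp only [InHs, wcoeff_sq]

namespace InHs

lemma hasSumLE_wcoeff_sq (hu : InHs ρ u) :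
    HasSumLE (fun k => wcoeff ρ u k ^ 2) (hnorm ρ u ^ 2) :=
  ⟨(inHs_iff_summable_wcoeff_sq.1 hu).2.2, (hnorm_sq ρ u).ge⟩

lemma wcoeff_even (hu : InHs ρ u) (σ : ℝ) (k : ℤ) : wcoeff σ u (-k) = wcoeff σ u k := by
  rw [wcoeff, wcoeff, hu.2.1, RCLike.norm_conj, Int.cast_neg, abs_neg]

lemma hasSumLE_wcoeff_sq_of_le (hu : InHs σ u) (h : ρ ≤ σ) :
    HasSumLE (fun k => wcoeff ρ u k ^ 2) (hnorm σ u ^ 2) :=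
  hu.hasSumLE_wcoeff_sq.of_le (fun _ => sq_nonneg _) fun k =>
    pow_le_pow_left₀ (wcoeff_nonneg _ _ _) (wcoeff_mono h hu.1 k) 2

lemma mono (hu : InHs σ u) (h : ρ ≤ σ) : InHs ρ u :=
  inHs_iff_summable_wcoeff_sq.2 ⟨hu.1, hu.2.1, (hu.hasSumLE_wcoeff_sq_of_le h).summable⟩

lemma hnorm_mono (hu : InHs σ u) (h : ρ ≤ σ) : hnorm ρ u ≤ hnorm σ u :=
  hnorm_le_of_hasSumLE (hu.hasSumLE_wcoeff_sq_of_le h) (hnorm_nonneg σ u)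

lemma hasSumLE_wcoeff_add_sq (hu : InHs ρ u) (hv : InHs ρ v) :
    HasSumLE (fun k => wcoeff ρ (u + v) k ^ 2) ((hnorm ρ u + hnorm ρ v) ^ 2) :=
  (hu.hasSumLE_wcoeff_sq.add_sq hv.hasSumLE_wcoeff_sq (hnorm_nonneg _ _) (hnorm_nonneg _ _)
    (wcoeff_nonneg _ _) (wcoeff_nonneg _ _)).of_le (fun _ => sq_nonneg _) fun k =>
      pow_le_pow_left₀ (wcoeff_nonneg _ _ _) (wcoeff_add_le ρ u v k) 2

lemma add (hu : InHs ρ u) (hv : InHs ρ v) : InHs ρ (u + v) :=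
  inHs_iff_summable_wcoeff_sq.2 ⟨by simp only [Pi.add_apply, hu.1, hv.1, add_zero],
    fun k => by simp only [Pi.add_apply, hu.2.1, hv.2.1, map_add],
    (hu.hasSumLE_wcoeff_add_sq hv).summable⟩

lemma neg (hu : InHs ρ u) : InHs ρ (-u) :=
  inHs_iff_summable_wcoeff_sq.2 ⟨by simp only [Pi.neg_apply, hu.1, neg_zero],
    fun k => by simp only [Pi.neg_apply, hu.2.1, map_neg],
    by simpa only [wcoeff_neg] using hu.hasSumLE_wcoeff_sq.summable⟩

lemma sub (hu : InHs ρ u) (hv : InHs ρ v) : InHs ρ (u - v) := by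
  simpa only [sub_eq_add_neg] using hu.add hv.neg

lemma hnorm_add_le (hu : InHs ρ u) (hv : InHs ρ v) : hnorm ρ (u + v) ≤ hnorm ρ u + hnorm ρ v :=
  hnorm_le_of_hasSumLE (hu.hasSumLE_wcoeff_add_sq hv)
    (add_nonneg (hnorm_nonneg _ _) (hnorm_nonneg _ _))

lemma hnorm_sub_le (hu : InHs ρ u) (hv : InHs ρ v) : hnorm ρ (u - v) ≤ hnorm ρ u + hnorm ρ v := by
  simpa only [sub_eq_add_neg, hnorm_neg] using hu.hnorm_add_le hv.neg

lemma wcoeff_le_hnorm (hu : InHs ρ u) (k : ℤ) : wcoeff ρ u k ≤ hnorm ρ u := by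
  refine abs_le_of_sq_le_sq' ?_ (hnorm_nonneg ρ u) |>.2
  rw [hnorm_sq]
  exact hu.hasSumLE_wcoeff_sq.summable.le_tsum k fun _ _ => sq_nonneg _

lemma norm_apply_le (hu : InHs ρ u) (k : ℤ) : ‖u k‖ ≤ |(k : ℝ)| ^ (-ρ) * hnorm ρ u := by
  calc ‖u k‖ = |(k : ℝ)| ^ (-ρ) * wcoeff ρ u k := by
        rw [rpow_mul_wcoeff hu.1, neg_add_cancel, wcoeff_order_zero]
    _ ≤ |(k : ℝ)| ^ (-ρ) * hnorm ρ u :=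
        mul_le_mul_of_nonneg_left (hu.wcoeff_le_hnorm k) (Real.rpow_nonneg (abs_nonneg _) _)

end InHs

lemma hasSum_sq_rpow_neg_Mconst (hσ : 1 / 2 < σ) :
    HasSum (fun k : ℤ => (|(k : ℝ)| ^ (-σ)) ^ 2) (Mconst σ ^ 2) := by
  have hsum : Summable fun n : ℕ => ((n : ℝ) + 1) ^ (-(2 * σ)) := by
    simpa only [Nat.cast_add, Nat.cast_one] using
      (summable_nat_add_iff 1).2 (Real.summable_nat_rpow.2 (by linarith : -(2 * σ) < -1))
  have hsq (k : ℤ) : (|(k : ℝ)| ^ (-σ)) ^ 2 = |(k : ℝ)| ^ (-(2 * σ)) := by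
    rw [← Real.rpow_mul_natCast (abs_nonneg _)]
    congr 1
    push_cast
    ring
  have hpos : HasSum (fun n : ℕ => |((n : ℤ) : ℝ)| ^ (-(2 * σ)))
      (∑' n : ℕ, ((n : ℝ) + 1) ^ (-(2 * σ))) := by
    rw [← hasSum_nat_add_iff' 1]
    have habs (n : ℕ) : |(n : ℝ) + 1| = n + 1 := abs_of_nonneg (by positivity)
    simpa [Real.zero_rpow (by linarith : -(2 * σ) ≠ 0), habs] using hsum.hasSum
  have hneg : HasSum (fun n : ℕ => |((-((n : ℤ) + 1) : ℤ) : ℝ)| ^ (-(2 * σ)))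
      (∑' n : ℕ, ((n : ℝ) + 1) ^ (-(2 * σ))) := by
    convert hsum.hasSum using 3 with n
    push_cast
    rw [abs_neg, abs_of_nonneg (by positivity)]
  rw [Mconst, Real.sq_sqrt (mul_nonneg zero_le_two (tsum_nonneg fun n => by positivity)), two_mul]
  simpa only [hsq] using hpos.of_nat_of_neg_add_one (f := fun k : ℤ => |(k : ℝ)| ^ (-(2 * σ))) hneg

lemma Mconst_nonneg (σ : ℝ) : 0 ≤ Mconst σ := Real.sqrt_nonneg _

lemma InHs.hasSumLE_wcoeff (hu : InHs s u) (h : 1 / 2 < s - ρ) :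
    HasSumLE (wcoeff ρ u) (Mconst (s - ρ) * hnorm s u) := by
  have hM := hasSum_sq_rpow_neg_Mconst h
  have hCS := HasSumLE.mul_of_sq ⟨hM.summable, hM.tsum_eq.le⟩ hu.hasSumLE_wcoeff_sq
    (Mconst_nonneg _) (hnorm_nonneg _ _) (fun k => by positivity) (wcoeff_nonneg s u)
  have hw (k : ℤ) : |(k : ℝ)| ^ (-(s - ρ)) * wcoeff s u k = wcoeff ρ u k := by
    rw [rpow_mul_wcoeff hu.1, neg_sub, sub_add_cancel]
  simpa only [hw] using hCS

lemma InHs.hasSumLE_norm (hu : InHs s u) (hs : 1 / 2 < s) :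
    HasSumLE (fun k => ‖u k‖) (Mconst s * hnorm s u) := by
  rw [← wcoeff_order_zero]
  simpa only [sub_zero] using hu.hasSumLE_wcoeff (ρ := 0) (by simpa only [sub_zero] using hs)

end Sobolev

/-! ### The bilinear form of a bounded symmetric kernel -/

/-- The interaction coefficients of a quadratic nonlinearity, with the symmetries that make the
bilinear form real and commutative and its cubic form cyclic, and with a pointwise bound of
order `-lam`. Homogeneity is not part of the definition. -/
structure IsKernel (lam C : ℝ) (S : ℤ → ℤ → ℤ → ℂ) : Prop where
  lam_nonneg : 0 ≤ lam
  eq_zero : ∀ k m n : ℤ, k * m * n = 0 → S k m n = 0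
  conj : ∀ k m n : ℤ, S k m n = starRingEnd ℂ (S (-k) (-m) (-n))
  swap : ∀ k m n : ℤ, S k m n = S k n m
  rotate : ∀ k m n : ℤ, S k m n = S m n k
  bound : ∀ k m n : ℤ, k * m * n ≠ 0 → ‖S k m n‖ ≤
    C / min (|(k : ℝ)| ^ lam) (min (|(m : ℝ)| ^ lam) (|(n : ℝ)| ^ lam))

/-- The operator `-∂ₓ` on Fourier coefficients. -/
noncomputable def negDeriv (a : ℤ → ℂ) (k : ℤ) : ℂ := -(Complex.I * (k : ℂ) * a k)

/-- The right-hand side `-a(u,u)ₓ` of the evolution equation, on Fourier coefficients. -/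
noncomputable def vectorField (S : ℤ → ℤ → ℤ → ℂ) (u : ℤ → ℂ) : ℤ → ℂ := negDeriv (aHat S u u)

/-- The norm bound of the bilinear form `a` on `Ḣ^s`. -/
noncomputable def algConst (s C : ℝ) : ℝ := 2 * (C * 2 ^ s * Mconst s)

section Kernel

variable {lam s C : ℝ} {S : ℤ → ℤ → ℤ → ℂ} {u v w z : ℤ → ℂ}

lemma norm_negDeriv_apply (a : ℤ → ℂ) (k : ℤ) : ‖negDeriv a k‖ = |(k : ℝ)| * ‖a k‖ := by
  rw [negDeriv, norm_neg, norm_mul, norm_mul, Complex.norm_I, one_mul, Complex.norm_intCast]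

lemma wcoeff_negDeriv {a : ℤ → ℂ} (ha : a 0 = 0) (k : ℤ) :
    wcoeff (s - 1) (negDeriv a) k = wcoeff s a k := by
  rcases eq_or_ne k 0 with rfl | hk
  · simp only [wcoeff, negDeriv, ha, mul_zero, neg_zero, norm_zero]
  · have hk' := abs_intCast_pos hk
    rw [wcoeff, wcoeff, norm_negDeriv_apply, ← mul_assoc, Real.rpow_sub_one hk'.ne',
      div_mul_cancel₀ _ hk'.ne']

lemma hnorm_negDeriv {a : ℤ → ℂ} (ha : a 0 = 0) : hnorm (s - 1) (negDeriv a) = hnorm s a := by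
  rw [← sq_eq_sq₀ (hnorm_nonneg _ _) (hnorm_nonneg _ _), hnorm_sq, hnorm_sq]
  simp only [wcoeff_negDeriv ha]

lemma InHs.negDeriv {a : ℤ → ℂ} (ha : InHs s a) : InHs (s - 1) (negDeriv a) := by
  refine inHs_iff_summable_wcoeff_sq.2 ⟨by simp [_root_.negDeriv], fun k => ?_, ?_⟩
  · simp [_root_.negDeriv, ha.2.1]
  · simpa only [wcoeff_negDeriv ha.1] using ha.hasSumLE_wcoeff_sq.summable

lemma abs_rpow_le_two_rpow_mul_add (hs : 0 ≤ s) (x y : ℝ) :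
    |x| ^ s ≤ 2 ^ s * (|x - y| ^ s + |y| ^ s) := by
  have hmax : |x| ≤ 2 * max |x - y| |y| := by
    linarith [abs_sub_le x y 0, le_max_left |x - y| |y|, le_max_right |x - y| |y|,
      congrArg abs (sub_zero x), congrArg abs (sub_zero y)]
  calc |x| ^ s ≤ (2 * max |x - y| |y|) ^ s := Real.rpow_le_rpow (abs_nonneg _) hmax hs
    _ = 2 ^ s * max |x - y| |y| ^ s := Real.mul_rpow zero_le_two (by positivity)
    _ ≤ 2 ^ s * (|x - y| ^ s + |y| ^ s) := by
        gcongr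
        rcases max_choice |x - y| |y| with h | h <;> rw [h]
        · exact le_add_of_nonneg_right (by positivity)
        · exact le_add_of_nonneg_left (by positivity)

/-- The interpolation behind the loss of one derivative: with `M` and `N` the frequencies of the
two factors and `K` controlling the output frequency, the weights `M ^ (s - 1)` and `N ^ s` cost at
most `K`. -/
lemma one_le_mul_rpow_sub_one_mul_rpow {K M N : ℝ} (hs : 1 / 2 ≤ s) (hK : 1 ≤ K) (hM : 1 ≤ M)
    (hN : 1 ≤ N) (hMN : M ≤ K * N) : 1 ≤ K * (M ^ (s - 1) * N ^ s) := by
  have hM₀ : 0 < M := one_pos.trans_le hM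
  have hle : M ^ (1 / 2 : ℝ) ≤ K * N ^ s := by
    calc M ^ (1 / 2 : ℝ) ≤ (K * N) ^ (1 / 2 : ℝ) := by gcongr
      _ = K ^ (1 / 2 : ℝ) * N ^ (1 / 2 : ℝ) := Real.mul_rpow (by positivity) (by positivity)
      _ ≤ K ^ (1 : ℝ) * N ^ s := by gcongr; linarith
      _ = K * N ^ s := by rw [Real.rpow_one]
  calc 1 = M ^ (-(1 / 2) : ℝ) * M ^ (1 / 2 : ℝ) := by
        rw [← Real.rpow_add hM₀, neg_add_cancel, Real.rpow_zero]
    _ ≤ M ^ (s - 1) * (K * N ^ s) := by gcongr; linarith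
    _ = K * (M ^ (s - 1) * N ^ s) := by ring

namespace IsKernel

lemma C_nonneg (hS : IsKernel lam C S) : 0 ≤ C := by
  simpa using (norm_nonneg _).trans (hS.bound 1 1 1 (by norm_num))

lemma mul_norm_le (hS : IsKernel lam C S) {k m n : ℤ} (h : k * m * n ≠ 0) {A B : ℝ} (hA : 0 ≤ A)
    (hAB : A / min (|(k : ℝ)| ^ lam) (min (|(m : ℝ)| ^ lam) (|(n : ℝ)| ^ lam)) ≤ B) :
    A * ‖S k m n‖ ≤ C * B := by
  refine (mul_le_mul_of_nonneg_left (hS.bound k m n h) hA).trans ?_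
  rw [mul_div_left_comm]
  exact mul_le_mul_of_nonneg_left hAB hS.C_nonneg

lemma norm_le (hS : IsKernel lam C S) (k m n : ℤ) : ‖S k m n‖ ≤ C := by
  by_cases h : k * m * n = 0
  · simpa only [hS.eq_zero k m n h, norm_zero] using hS.C_nonneg
  · obtain ⟨⟨hk, hm⟩, hn⟩ : (k ≠ 0 ∧ m ≠ 0) ∧ n ≠ 0 := by simpa only [mul_ne_zero_iff] using h
    have hone {j : ℤ} (hj : j ≠ 0) : 1 ≤ |(j : ℝ)| ^ lam :=
      Real.one_le_rpow (one_le_abs_intCast hj) hS.lam_nonneg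
    exact (hS.bound k m n h).trans
      (div_le_self hS.C_nonneg (le_min (hone hk) (le_min (hone hm) (hone hn))))

lemma norm_term_le (hS : IsKernel lam C S) (u v : ℤ → ℂ) (k n : ℤ) :
    ‖S (-k) (k - n) n * u (k - n) * v n‖ ≤ C * (‖u (k - n)‖ * ‖v n‖) := by
  rw [norm_mul, norm_mul, mul_assoc]
  exact mul_le_mul_of_nonneg_right (hS.norm_le _ _ _) (by positivity)

lemma algConst_nonneg (hS : IsKernel lam C S) (s : ℝ) : 0 ≤ algConst s C := by
  have := hS.C_nonneg
  have := Mconst_nonneg s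
  unfold algConst
  positivity

lemma aHat_zero (hS : IsKernel lam C S) (u v : ℤ → ℂ) : aHat S u v 0 = 0 := by
  simp [aHat, hS.eq_zero 0]

lemma aHat_comm (hS : IsKernel lam C S) (u v : ℤ → ℂ) : aHat S u v = aHat S v u := by
  funext k
  rw [aHat, ← (Equiv.subLeft k).tsum_eq, aHat]
  refine tsum_congr fun n => ?_
  rw [Equiv.subLeft_apply, sub_sub_cancel, hS.swap, mul_right_comm]

lemma aHat_conj (hS : IsKernel lam C S) (hu : ∀ k, u (-k) = starRingEnd ℂ (u k))
    (hv : ∀ k, v (-k) = starRingEnd ℂ (v k)) (k : ℤ) :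
    aHat S u v (-k) = starRingEnd ℂ (aHat S u v k) := by
  rw [aHat, aHat, Complex.conj_tsum, ← (Equiv.neg ℤ).tsum_eq]
  refine tsum_congr fun n => ?_
  rw [Equiv.neg_apply, show -k - -n = -(k - n) by ring, hS.conj, hu, hv]
  simp only [neg_neg, map_mul]

lemma aHat_summable (hS : IsKernel lam C S) (hs : 1 / 2 < s) (hu : InHs s u) (hv : InHs s v)
    (k : ℤ) : Summable fun n => S (-k) (k - n) n * u (k - n) * v n := by
  have hu₀ := hu.hasSumLE_wcoeff_sq_of_le (by linarith : (0 : ℝ) ≤ s)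
  rw [wcoeff_order_zero] at hu₀
  have hconv := (hu₀.convolution_sq (hv.hasSumLE_norm hs) (fun _ => norm_nonneg _)
    fun _ => norm_nonneg _).1 k
  exact .of_norm_bounded (hconv.mul_left C) (hS.norm_term_le u v k)

lemma aHat_self_sub_aHat_self (hS : IsKernel lam C S) (hs : 1 / 2 < s) (hu : InHs s u)
    (hv : InHs s v) : aHat S u u - aHat S v v = aHat S (u - v) (u + v) := by
  have hsum {a b : ℤ → ℂ} (ha : InHs s a) (hb : InHs s b) := hS.aHat_summable hs ha hb
  have hexp : aHat S (u - v) (u + v) =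
      aHat S u u + aHat S u v - (aHat S v u + aHat S v v) := by
    funext k
    simp only [Pi.add_apply, Pi.sub_apply, aHat]
    rw [← (hsum hu hu k).tsum_add (hsum hu hv k), ← (hsum hv hu k).tsum_add (hsum hv hv k),
      ← ((hsum hu hu k).add (hsum hu hv k)).tsum_sub ((hsum hv hu k).add (hsum hv hv k))]
    exact tsum_congr fun n => by ring
  rw [hexp, hS.aHat_comm v u]
  abel

lemma wcoeff_aHat_le (hS : IsKernel lam C S) (hs : 1 / 2 < s) (hu : InHs s u) (hv : InHs s v)
    (k : ℤ) : wcoeff s (aHat S u v) k ≤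
      C * 2 ^ s * ((∑' n, wcoeff s u (k - n) * ‖v n‖) + ∑' n, wcoeff s v (k - n) * ‖u n‖) := by
  have hsum {a b : ℤ → ℂ} (ha : InHs s a) (hb : InHs s b) :
      Summable fun n => wcoeff s a (k - n) * ‖b n‖ :=
    (ha.hasSumLE_wcoeff_sq.convolution_sq (hb.hasSumLE_norm hs) (wcoeff_nonneg _ _)
      fun _ => norm_nonneg _).1 k
  have huv : HasSumLE (fun n => wcoeff s u (k - n) * ‖v n‖) _ := ⟨hsum hu hv, le_rfl⟩
  have hvu : HasSumLE (fun n => wcoeff s v (k - n) * ‖u n‖) _ := ⟨hsum hv hu, le_rfl⟩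
  have hbound := (huv.add (hvu.comp_equiv (Equiv.subLeft k))).const_mul
    (mul_nonneg hS.C_nonneg (Real.rpow_nonneg zero_le_two s))
  have hk : 0 ≤ |(k : ℝ)| ^ s := by positivity
  rw [wcoeff, ← norm_smul_of_nonneg hk, aHat, ← tsum_const_smul'']
  refine hbound.norm_tsum_le fun n => ?_
  rw [norm_smul_of_nonneg hk, Equiv.subLeft_apply, sub_sub_cancel]
  calc |(k : ℝ)| ^ s * ‖S (-k) (k - n) n * u (k - n) * v n‖
      ≤ 2 ^ s * (|((k - n : ℤ) : ℝ)| ^ s + |(n : ℝ)| ^ s) * (C * (‖u (k - n)‖ * ‖v n‖)) := by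
        push_cast
        exact mul_le_mul (abs_rpow_le_two_rpow_mul_add (by linarith) _ _)
          (hS.norm_term_le u v k n) (norm_nonneg _) (by positivity)
    _ = C * 2 ^ s * (wcoeff s u (k - n) * ‖v n‖ + wcoeff s v n * ‖u (k - n)‖) := by
        rw [wcoeff, wcoeff]
        ring

lemma hasSumLE_wcoeff_aHat_sq (hS : IsKernel lam C S) (hs : 1 / 2 < s) (hu : InHs s u)
    (hv : InHs s v) : HasSumLE (fun k => wcoeff s (aHat S u v) k ^ 2)
      ((algConst s C * (hnorm s u * hnorm s v)) ^ 2) := by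
  have hconv {a b : ℤ → ℂ} (ha : InHs s a) (hb : InHs s b) :=
    (ha.hasSumLE_wcoeff_sq.convolution_sq (hb.hasSumLE_norm hs) (wcoeff_nonneg s a)
      fun _ => norm_nonneg _).2
  have hpos {a b : ℤ → ℂ} (k : ℤ) : 0 ≤ ∑' n, wcoeff s a (k - n) * ‖b n‖ :=
    tsum_nonneg fun n => mul_nonneg (wcoeff_nonneg _ _ _) (norm_nonneg _)
  have hnn (a b : ℤ → ℂ) : 0 ≤ hnorm s a * (Mconst s * hnorm s b) :=
    mul_nonneg (hnorm_nonneg _ _) (mul_nonneg (Mconst_nonneg s) (hnorm_nonneg _ _))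
  have hbound := ((hconv hu hv).add_sq (hconv hv hu) (hnn u v) (hnn v u) hpos hpos).const_mul
    (sq_nonneg (C * 2 ^ s))
  simp only [← mul_pow] at hbound
  rw [show C * 2 ^ s * (hnorm s u * (Mconst s * hnorm s v) + hnorm s v * (Mconst s * hnorm s u)) =
    algConst s C * (hnorm s u * hnorm s v) by rw [algConst]; ring] at hbound
  exact hbound.of_le (fun _ => sq_nonneg _) fun k =>
    pow_le_pow_left₀ (wcoeff_nonneg _ _ _) (hS.wcoeff_aHat_le hs hu hv k) 2

lemma hnorm_aHat_le (hS : IsKernel lam C S) (hs : 1 / 2 < s) (hu : InHs s u) (hv : InHs s v) :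
    hnorm s (aHat S u v) ≤ algConst s C * (hnorm s u * hnorm s v) :=
  hnorm_le_of_hasSumLE (hS.hasSumLE_wcoeff_aHat_sq hs hu hv)
    (mul_nonneg (hS.algConst_nonneg s) (mul_nonneg (hnorm_nonneg _ _) (hnorm_nonneg _ _)))

lemma inHs_aHat (hS : IsKernel lam C S) (hs : 1 / 2 < s) (hu : InHs s u) (hv : InHs s v) :
    InHs s (aHat S u v) :=
  inHs_iff_summable_wcoeff_sq.2 ⟨hS.aHat_zero u v, hS.aHat_conj hu.2.1 hv.2.1,
    (hS.hasSumLE_wcoeff_aHat_sq hs hu hv).summable⟩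

lemma inHs_vectorField (hS : IsKernel lam C S) (hs : 1 / 2 < s) (hu : InHs s u) :
    InHs (s - 1) (vectorField S u) :=
  (hS.inHs_aHat hs hu hu).negDeriv

lemma vectorField_sub (hS : IsKernel lam C S) (hs : 1 / 2 < s) (hu : InHs s u) (hv : InHs s v) :
    vectorField S u - vectorField S v = negDeriv (aHat S (u - v) (u + v)) := by
  rw [← hS.aHat_self_sub_aHat_self hs hu hv]
  funext k
  simp only [Pi.sub_apply, vectorField, negDeriv]
  ring

lemma hnorm_vectorField_sub_le (hS : IsKernel lam C S) (hs : 1 / 2 < s) (hu : InHs s u)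
    (hv : InHs s v) : hnorm (s - 1) (vectorField S u - vectorField S v) ≤
      algConst s C * (hnorm s (u - v) * hnorm s (u + v)) := by
  rw [hS.vectorField_sub hs hu hv, hnorm_negDeriv (hS.aHat_zero _ _)]
  exact hS.hnorm_aHat_le hs (hu.sub hv) (hu.add hv)

lemma norm_aHat_apply_le (hS : IsKernel lam C S) (hs : 1 / 2 < s) (hw : InHs (s - 1) w)
    (hz : InHs s z) (k : ℤ) :
    ‖aHat S w z k‖ ≤ C * (1 + |(k : ℝ)|) * (hnorm (s - 1) w * hnorm s z) := by
  have hCS := ((hw.hasSumLE_wcoeff_sq.comp_equiv (Equiv.subLeft k)).mul_of_sq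
    hz.hasSumLE_wcoeff_sq (hnorm_nonneg _ _) (hnorm_nonneg _ _) (fun _ => wcoeff_nonneg _ _ _)
    (wcoeff_nonneg _ _)).const_mul (mul_nonneg hS.C_nonneg (by positivity : 0 ≤ 1 + |(k : ℝ)|))
  refine hCS.norm_tsum_le fun n => (hS.norm_term_le w z k n).trans ?_
  rw [mul_assoc, Equiv.subLeft_apply]
  refine mul_le_mul_of_nonneg_left ?_ hS.C_nonneg
  rcases eq_or_ne n 0 with rfl | hn
  · simp [hz.1, wcoeff]
  rcases eq_or_ne (k - n) 0 with hm | hm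
  · simp [hm, hw.1, wcoeff]
  have hn₁ := one_le_abs_intCast hn
  have hm_le : |((k - n : ℤ) : ℝ)| ≤ (1 + |(k : ℝ)|) * |(n : ℝ)| := by
    push_cast
    nlinarith [abs_sub (k : ℝ) n, abs_nonneg (k : ℝ)]
  have hone := one_le_mul_rpow_sub_one_mul_rpow hs.le (le_add_of_nonneg_right (abs_nonneg (k : ℝ)))
    (one_le_abs_intCast hm) hn₁ hm_le
  calc ‖w (k - n)‖ * ‖z n‖ ≤ (1 + |(k : ℝ)|) * (|((k - n : ℤ) : ℝ)| ^ (s - 1) * |(n : ℝ)| ^ s) *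
        (‖w (k - n)‖ * ‖z n‖) := le_mul_of_one_le_left (by positivity) hone
    _ = (1 + |(k : ℝ)|) * (wcoeff (s - 1) w (k - n) * wcoeff s z n) := by
        rw [wcoeff, wcoeff]
        ring

lemma norm_vectorField_sub_apply_le (hS : IsKernel lam C S) (hs : 1 / 2 < s) (hu : InHs s u)
    (hv : InHs s v) (k : ℤ) : ‖vectorField S u k - vectorField S v k‖ ≤
      |(k : ℝ)| * (C * (1 + |(k : ℝ)|) * (hnorm (s - 1) (u - v) * hnorm s (u + v))) := by
  rw [← Pi.sub_apply, hS.vectorField_sub hs hu hv, norm_negDeriv_apply]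
  exact mul_le_mul_of_nonneg_left
    (hS.norm_aHat_apply_le hs ((hu.sub hv).mono (by linarith)) (hu.add hv) k) (abs_nonneg _)

end IsKernel

end Kernel

/-! ### The odd power and its commutator estimate -/

/-- The odd extension `x |x| ^ (2ρ)` of the power of exponent `2ρ + 1`. It is the multiplier that
the `Ḣ^ρ` energy estimate attaches to each of the three frequencies. -/
noncomputable def oddPow (ρ x : ℝ) : ℝ := x * |x| ^ (2 * ρ)

/-- The constant of the commutator estimate `oddPow_add_div_min_le`. -/
noncomputable def commConst (s : ℝ) : ℝ := (2 * s - 1) * (2 ^ |s - 1| * 2 ^ |s - 1|) + 2 * 2 ^ s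

section OddPow

variable {ρ s lam : ℝ} {a b k m n x : ℝ}

lemma oddPow_neg (ρ x : ℝ) : oddPow ρ (-x) = -oddPow ρ x := by
  simp only [oddPow, abs_neg, neg_mul]

lemma oddPow_of_pos (ρ : ℝ) (hx : 0 < x) : oddPow ρ x = |x| ^ (2 * ρ + 1) := by
  rw [oddPow, abs_of_pos hx, mul_comm, Real.rpow_add_one hx.ne']

lemma oddPow_of_neg (ρ : ℝ) (hx : x < 0) : oddPow ρ x = -|x| ^ (2 * ρ + 1) := by
  rw [← abs_neg x, ← oddPow_of_pos ρ (neg_pos.2 hx), oddPow_neg, neg_neg]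

lemma abs_oddPow (ρ : ℝ) (hx : x ≠ 0) : |oddPow ρ x| = |x| ^ (2 * ρ + 1) := by
  rw [oddPow, abs_mul, abs_of_nonneg (Real.rpow_nonneg (abs_nonneg x) _), mul_comm,
    Real.rpow_add_one (abs_pos.2 hx).ne']

lemma rpow_le_two_rpow_abs_mul_rpow (ha : 0 < a) (hb : 0 < b) (hab : a ≤ 2 * b) (hba : b ≤ 2 * a)
    (r : ℝ) : a ^ r ≤ 2 ^ |r| * b ^ r := by
  rcases le_or_gt 0 r with hr | hr
  · rw [abs_of_nonneg hr, ← Real.mul_rpow zero_le_two hb.le]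
    exact Real.rpow_le_rpow ha.le hab hr
  · calc a ^ r = 2 ^ |r| * (2 * a) ^ r := by
          rw [Real.mul_rpow zero_le_two ha.le, ← mul_assoc, ← Real.rpow_add zero_lt_two,
            abs_of_neg hr, neg_add_cancel, Real.rpow_zero, one_mul]
      _ ≤ 2 ^ |r| * b ^ r :=
          mul_le_mul_of_nonneg_left (Real.rpow_le_rpow_of_nonpos hb hba hr.le) (by positivity)

lemma abs_rpow_sub_rpow_le (hs : 1 / 2 < s) (ha : 0 < a) (hb : 0 < b) (hab : a ≤ 2 * b)
    (hba : b ≤ 2 * a) : |a ^ (2 * s - 1) - b ^ (2 * s - 1)| ≤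
      (2 * s - 1) * (2 ^ |s - 1| * 2 ^ |s - 1|) * (|a - b| * (a ^ (s - 1) * b ^ (s - 1))) := by
  have hmem {x : ℝ} (hx : x ∈ Set.uIcc b a) : 0 < x ∧ x ≤ 2 * a ∧ a ≤ 2 * x ∧ x ≤ 2 * b ∧
      b ≤ 2 * x := by
    rcases Set.mem_uIcc.1 hx with h | h <;> refine ⟨?_, ?_, ?_, ?_, ?_⟩ <;> linarith
  have hderiv (x : ℝ) (hx : x ∈ Set.uIcc b a) : HasDerivWithinAt (fun y : ℝ => y ^ (2 * s - 1))
      ((2 * s - 1) * (x ^ (s - 1) * x ^ (s - 1))) (Set.uIcc b a) x := by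
    rw [← Real.rpow_add (hmem hx).1, show s - 1 + (s - 1) = 2 * s - 1 - 1 by ring]
    exact (Real.hasDerivAt_rpow_const (Or.inl (hmem hx).1.ne')).hasDerivWithinAt
  have hbound (x : ℝ) (hx : x ∈ Set.uIcc b a) : ‖(2 * s - 1) * (x ^ (s - 1) * x ^ (s - 1))‖ ≤
      (2 * s - 1) * (2 ^ |s - 1| * a ^ (s - 1) * (2 ^ |s - 1| * b ^ (s - 1))) := by
    obtain ⟨hx₀, hxa, hax, hxb, hbx⟩ := hmem hx
    have hq : 0 ≤ 2 * s - 1 := by linarith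
    rw [Real.norm_of_nonneg (by positivity)]
    gcongr
    · exact rpow_le_two_rpow_abs_mul_rpow hx₀ ha hxa hax _
    · exact rpow_le_two_rpow_abs_mul_rpow hx₀ hb hxb hbx _
  have hmvt := (convex_uIcc b a).norm_image_sub_le_of_norm_hasDerivWithin_le hderiv hbound
    Set.left_mem_uIcc Set.right_mem_uIcc
  simp only [Real.norm_eq_abs] at hmvt
  linarith

lemma abs_oddPow_add_of_mul_neg (ρ : ℝ) (h : k * m < 0) :
    |oddPow ρ k + oddPow ρ m| = |(|k| ^ (2 * ρ + 1) - |m| ^ (2 * ρ + 1))| := by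
  rcases mul_neg_iff.1 h with ⟨hk, hm⟩ | ⟨hk, hm⟩
  · rw [oddPow_of_pos ρ hk, oddPow_of_neg ρ hm, sub_eq_add_neg]
  · rw [oddPow_of_neg ρ hk, oddPow_of_pos ρ hm, neg_add_eq_sub, abs_sub_comm]

lemma abs_oddPow_add_le_of_small_sum (hs : 1 / 2 < s) (hk : k ≠ 0) (hm : m ≠ 0) (hn : n ≠ 0)
    (h : k + m + n = 0) (hnk : |n| ≤ |k|) (hnm : |n| ≤ |m|) :
    |oddPow (s - 1) k + oddPow (s - 1) m| ≤
      commConst s * (|k| ^ (s - 1) * |m| ^ (s - 1) * |n|) := by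
  have hneg : n = -(k + m) := by linarith
  have hkm : k * m < 0 := by
    by_contra! hcon
    have hadd : |n| = |k| + |m| := by
      rw [hneg, abs_neg, abs_add_eq_add_abs_iff]
      exact mul_nonneg_iff.1 hcon
    linarith [abs_pos.2 hk]
  have hdiff : |n| = |(|k| - |m|)| := by
    rw [hneg, abs_neg]
    rcases mul_neg_iff.1 hkm with ⟨hk, hm⟩ | ⟨hk, hm⟩
    · rw [abs_of_pos hk, abs_of_neg hm, sub_neg_eq_add]
    · rw [abs_of_neg hk, abs_of_pos hm, ← abs_neg]
      ring_nf
  have htri := abs_le.1 hdiff.ge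
  have hmain := abs_rpow_sub_rpow_le hs (abs_pos.2 hk) (abs_pos.2 hm) (by linarith) (by linarith)
  rw [abs_oddPow_add_of_mul_neg _ hkm, show 2 * (s - 1) + 1 = 2 * s - 1 by ring]
  refine hmain.trans ?_
  rw [← hdiff, mul_comm |n|, commConst]
  gcongr
  exact le_add_of_nonneg_right (by positivity)

lemma abs_oddPow_add_le_of_small_left (hs : 1 / 2 < s) (hk : k ≠ 0) (hm : m ≠ 0)
    (h : k + m + n = 0) (hkm : |k| ≤ |m|) (hkn : |k| ≤ |n|) :
    |oddPow (s - 1) k + oddPow (s - 1) m| ≤ commConst s * (|m| ^ (s - 1) * |n| ^ s) := by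
  have hm₀ : 0 < |m| := abs_pos.2 hm
  have hmn : |m| ≤ 2 * |n| := by
    rw [show m = -(k + n) by linarith, abs_neg]
    linarith [abs_add_le k n]
  calc |oddPow (s - 1) k + oddPow (s - 1) m|
      ≤ |k| ^ (2 * (s - 1) + 1) + |m| ^ (2 * (s - 1) + 1) := by
        rw [← abs_oddPow _ hk, ← abs_oddPow _ hm]
        exact abs_add_le _ _
    _ ≤ 2 * |m| ^ (s - 1 + s) := by
        rw [show 2 * (s - 1) + 1 = s - 1 + s by ring, two_mul]
        gcongr
        linarith
    _ ≤ 2 * (|m| ^ (s - 1) * (2 ^ s * |n| ^ s)) := by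
        rw [Real.rpow_add hm₀, ← Real.mul_rpow zero_le_two (abs_nonneg n)]
        gcongr
    _ = 2 * 2 ^ s * (|m| ^ (s - 1) * |n| ^ s) := by ring
    _ ≤ commConst s * (|m| ^ (s - 1) * |n| ^ s) := by
        have hq : 0 ≤ 2 * s - 1 := by linarith
        rw [commConst]
        gcongr
        exact le_add_of_nonneg_left (by positivity)

lemma commConst_nonneg (hs : 1 / 2 < s) : 0 ≤ commConst s := by
  have hq : 0 ≤ 2 * s - 1 := by linarith
  unfold commConst
  positivity

lemma oddPow_add_div_min_le (hs : 1 / 2 < s) (hlam : 0 ≤ lam) (hk : k ≠ 0) (hm : m ≠ 0)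
    (hn : n ≠ 0) (h : k + m + n = 0) :
    |oddPow (s - 1) k + oddPow (s - 1) m| / min (|k| ^ lam) (min (|m| ^ lam) (|n| ^ lam)) ≤
      commConst s * (|k| ^ (s - 1) * |m| ^ (s - 1) * |n| ^ (1 - lam) +
        |m| ^ (s - 1) * |n| ^ s * |k| ^ (-lam) + |k| ^ (s - 1) * |n| ^ s * |m| ^ (-lam)) := by
  have hdiv {x Y : ℝ} (hx : 0 < x) (hxk : x ≤ |k|) (hxm : x ≤ |m|) (hxn : x ≤ |n|)
      (hY : |oddPow (s - 1) k + oddPow (s - 1) m| ≤ commConst s * Y) :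
      |oddPow (s - 1) k + oddPow (s - 1) m| / min (|k| ^ lam) (min (|m| ^ lam) (|n| ^ lam)) ≤
        commConst s * (Y * x ^ (-lam)) := by
    rw [Real.rpow_neg hx.le, ← mul_assoc, ← div_eq_mul_inv]
    have hmin : x ^ lam ≤ min (|k| ^ lam) (min (|m| ^ lam) (|n| ^ lam)) := by
      refine le_min ?_ (le_min ?_ ?_) <;> gcongr
    exact div_le_div₀ ((abs_nonneg _).trans hY) hY (by positivity) hmin
  have hk₀ := abs_pos.2 hk
  have hm₀ := abs_pos.2 hm
  have hn₀ := abs_pos.2 hn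
  have hterm₁ : 0 ≤ |k| ^ (s - 1) * |m| ^ (s - 1) * |n| ^ (1 - lam) := by positivity
  have hterm₂ : 0 ≤ |m| ^ (s - 1) * |n| ^ s * |k| ^ (-lam) := by positivity
  have hterm₃ : 0 ≤ |k| ^ (s - 1) * |n| ^ s * |m| ^ (-lam) := by positivity
  obtain ⟨hnk, hnm⟩ | ⟨hkm, hkn⟩ | ⟨hmk, hmn⟩ : (|n| ≤ |k| ∧ |n| ≤ |m|) ∨
      (|k| ≤ |m| ∧ |k| ≤ |n|) ∨ (|m| ≤ |k| ∧ |m| ≤ |n|) := by grind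
  · refine (hdiv hn₀ hnk hnm le_rfl (abs_oddPow_add_le_of_small_sum hs hk hm hn h hnk hnm)).trans
      (mul_le_mul_of_nonneg_left ?_ (commConst_nonneg hs))
    rw [mul_assoc _ |n|, mul_comm |n|, ← Real.rpow_add_one hn₀.ne', neg_add_eq_sub]
    linarith
  · refine (hdiv hk₀ le_rfl hkm hkn (abs_oddPow_add_le_of_small_left hs hk hm h hkm hkn)).trans
      (mul_le_mul_of_nonneg_left ?_ (commConst_nonneg hs))
    linarith
  · have hsmall := abs_oddPow_add_le_of_small_left hs hm hk (by linarith) hmk hmn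
    rw [add_comm (oddPow _ m)] at hsmall
    refine (hdiv hm₀ hmk le_rfl hmn hsmall).trans
      (mul_le_mul_of_nonneg_left ?_ (commConst_nonneg hs))
    linarith

end OddPow

/-! ### Energy estimates -/

/-- The inequality defining `C_{s,λ}`: a bound for the symbol of the cubic form that governs the
evolution of the `Ḣ^s` norm. -/
def CubicSymbolBound (lam s Cs : ℝ) : Prop :=
  ∀ k m n : ℝ, k ≠ 0 → m ≠ 0 → n ≠ 0 → k + m + n = 0 →
    |oddPow s k + oddPow s m + oddPow s n| / min (|k| ^ lam) (min (|m| ^ lam) (|n| ^ lam)) ≤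
      Cs * (|k| ^ s * |m| ^ s * |n| ^ (1 - lam) + |n| ^ s * |k| ^ s * |m| ^ (1 - lam) +
        |m| ^ s * |n| ^ s * |k| ^ (1 - lam))

/-- The constant `K_{s,λ}` of the Riccati inequality `y' ≤ K y²` satisfied by the `Ḣ^s` norm `y`. -/
noncomputable def energyConst (lam s C Cs : ℝ) : ℝ := C * Cs * Mconst (s + lam - 1)

/-- The contribution of the frequency `k` to the evolution of the `Ḣ^ρ` energy: if
`w_t = -a(w,z)ₓ`, then `|k| ^ (2ρ) * ‖w k‖ ^ 2` has derivative `2 * (energyRate S ρ w z k).im`. -/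
noncomputable def energyRate (S : ℤ → ℤ → ℤ → ℂ) (ρ : ℝ) (w z : ℤ → ℂ) (k : ℤ) : ℂ :=
  (oddPow ρ k : ℂ) * (w (-k) * aHat S w z k)

/-- The terms `(k, n)` of the double series obtained by expanding `energyRate`. The frequencies of
its three factors are `-k`, `k - n` and `n`, which sum to zero. -/
noncomputable def energyTerm (S : ℤ → ℤ → ℤ → ℂ) (ρ : ℝ) (w z : ℤ → ℂ) (p : ℤ × ℤ) : ℂ :=
  (oddPow ρ p.1 : ℂ) * (w (-p.1) * (S (-p.1) (p.1 - p.2) p.2 * w (p.1 - p.2) * z p.2))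

/-- The cyclic permutation `(-k, k - n, n) ↦ (k - n, n, -k)` of the three frequencies. -/
def rotateFreq : ℤ × ℤ ≃ ℤ × ℤ where
  toFun p := (p.2 - p.1, -p.1)
  invFun p := (-p.2, p.1 - p.2)
  left_inv p := by ext <;> simp
  right_inv p := by ext <;> simp

/-- The exchange `(-k, k - n, n) ↦ (k - n, -k, n)` of the first two frequencies. -/
def flipFreq : ℤ × ℤ ≃ ℤ × ℤ where
  toFun p := (p.2 - p.1, p.2)
  invFun p := (p.2 - p.1, p.2)
  left_inv p := by ext <;> simp
  right_inv p := by ext <;> simp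

section Triad

variable {ρ₁ ρ₂ ρ r : ℝ} {x y z : ℤ → ℂ}

lemma hasSumLE_triad (hx : InHs ρ₁ x) (hy : InHs ρ₂ y) (hz : InHs r z) (h : 1 / 2 < r - ρ) :
    HasSumLE (fun p : ℤ × ℤ => wcoeff ρ₁ x p.1 * wcoeff ρ₂ y (p.1 - p.2) * wcoeff ρ z p.2)
      (hnorm ρ₁ x * hnorm ρ₂ y * (Mconst (r - ρ) * hnorm r z)) :=
  hasSumLE_mul_mul_sub hx.hasSumLE_wcoeff_sq hy.hasSumLE_wcoeff_sq (hz.hasSumLE_wcoeff h)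
    (hnorm_nonneg _ _) (hnorm_nonneg _ _) (wcoeff_nonneg _ _) (wcoeff_nonneg _ _)
    (wcoeff_nonneg _ _)

lemma hasSumLE_triad_rotate (hx : InHs ρ₁ x) (hy : InHs ρ₂ y) (hz : InHs r z)
    (h : 1 / 2 < r - ρ) :
    HasSumLE (fun p : ℤ × ℤ => wcoeff ρ₁ x (p.1 - p.2) * wcoeff ρ₂ y p.2 * wcoeff ρ z p.1)
      (hnorm ρ₁ x * hnorm ρ₂ y * (Mconst (r - ρ) * hnorm r z)) := by
  convert (hasSumLE_triad hx hy hz h).comp_equiv rotateFreq using 2 with p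
  rw [← hx.wcoeff_even, ← hz.wcoeff_even _ p.1]
  simp [rotateFreq]

lemma hasSumLE_triad_rotate_rotate (hx : InHs ρ₁ x) (hy : InHs ρ₂ y) (hz : InHs r z)
    (h : 1 / 2 < r - ρ) :
    HasSumLE (fun p : ℤ × ℤ => wcoeff ρ₁ x p.2 * wcoeff ρ₂ y p.1 * wcoeff ρ z (p.1 - p.2))
      (hnorm ρ₁ x * hnorm ρ₂ y * (Mconst (r - ρ) * hnorm r z)) := by
  convert (hasSumLE_triad_rotate hx hy hz h).comp_equiv rotateFreq using 2 with p
  rw [← hy.wcoeff_even, ← hz.wcoeff_even _ (p.1 - p.2)]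
  simp [rotateFreq]

end Triad

section EnergyEstimate

variable {lam s ρ C Cs : ℝ} {S : ℤ → ℤ → ℤ → ℂ} {u w z : ℤ → ℂ}

lemma CubicSymbolBound.pos (hs : 0 < s) (h : CubicSymbolBound lam s Cs) : 0 < Cs := by
  have hle := h 1 1 (-2) (by norm_num) (by norm_num) (by norm_num) (by norm_num)
  simp only [oddPow, abs_one, abs_neg, Nat.abs_ofNat, Real.one_rpow, one_mul, mul_one] at hle
  have hnum : (1 : ℝ) + 1 + -2 * 2 ^ (2 * s) < 0 := by
    linarith [Real.one_lt_rpow one_lt_two (by linarith : 0 < 2 * s)]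
  exact pos_of_mul_pos_left ((div_pos (abs_pos.2 hnum.ne) (by positivity)).trans_le hle)
    (by positivity)

lemma hasDerivAt_wcoeff_sq (ρ : ℝ) {w : ℝ → ℤ → ℂ} {k : ℤ} {t : ℝ}
    (hconj : w t (-k) = starRingEnd ℂ (w t k))
    (h : HasDerivAt (fun τ => w τ k) (negDeriv (aHat S (w t) z) k) t) :
    HasDerivAt (fun τ => wcoeff ρ (w τ) k ^ 2) (2 * (energyRate S ρ (w t) z k).im) t := by
  simp only [wcoeff_sq]
  refine (h.norm_sq.const_mul (|(k : ℝ)| ^ (2 * ρ))).congr_deriv ?_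
  rw [Complex.inner, energyRate, oddPow, negDeriv, hconj]
  simp only [Complex.mul_im, Complex.mul_re, Complex.neg_re, Complex.neg_im, Complex.ofReal_re,
    Complex.ofReal_im, Complex.conj_re, Complex.conj_im, Complex.I_re, Complex.I_im,
    Complex.intCast_re, Complex.intCast_im]
  ring

lemma hasSum_energyRate (h : Summable (energyTerm S ρ w z)) :
    HasSum (energyRate S ρ w z) (∑' p, energyTerm S ρ w z p) := by
  have hfib (k : ℤ) : ∑' n, energyTerm S ρ w z (k, n) = energyRate S ρ w z k := by
    simp only [energyTerm, energyRate, aHat, tsum_mul_left]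
  rw [h.tsum_prod]
  simpa only [hfib] using h.prod.hasSum

namespace IsKernel

lemma norm_energyTerm_le (hS : IsKernel lam C S) (hs : 1 / 2 < s) (hw : InHs s w) (z : ℤ → ℂ)
    (p : ℤ × ℤ) : ‖energyTerm S (s - 1) w z p‖ ≤ C * 2 ^ s *
      (wcoeff s w p.1 * wcoeff s w (p.1 - p.2) * wcoeff 0 z p.2 +
        wcoeff s z p.2 * wcoeff s w p.1 * wcoeff 0 w (p.1 - p.2)) := by
  obtain ⟨k, n⟩ := p
  rcases eq_or_ne k 0 with rfl | hk
  · simp [energyTerm, hw.1, wcoeff]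
  have hk₁ := one_le_abs_intCast hk
  have hweight : |oddPow (s - 1) k| ≤
      |(k : ℝ)| ^ s * (2 ^ s * (|((k - n : ℤ) : ℝ)| ^ s + |(n : ℝ)| ^ s)) := by
    calc |oddPow (s - 1) k| ≤ |(k : ℝ)| ^ (s + s) := by
          rw [abs_oddPow _ (Int.cast_ne_zero.2 hk)]
          exact Real.rpow_le_rpow_of_exponent_le hk₁ (by linarith)
      _ = |(k : ℝ)| ^ s * |(k : ℝ)| ^ s := Real.rpow_add (by linarith) _ _
      _ ≤ |(k : ℝ)| ^ s * (2 ^ s * (|((k - n : ℤ) : ℝ)| ^ s + |(n : ℝ)| ^ s)) := by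
          push_cast
          gcongr
          exact abs_rpow_le_two_rpow_mul_add (by linarith) _ _
  rw [energyTerm, norm_mul, norm_mul, Complex.norm_real, Real.norm_eq_abs, hw.2.1,
    RCLike.norm_conj]
  calc |oddPow (s - 1) k| * (‖w k‖ * ‖S (-k) (k - n) n * w (k - n) * z n‖)
      ≤ (|(k : ℝ)| ^ s * (2 ^ s * (|((k - n : ℤ) : ℝ)| ^ s + |(n : ℝ)| ^ s))) *
        (‖w k‖ * (C * (‖w (k - n)‖ * ‖z n‖))) := by
        gcongr
        exact hS.norm_term_le w z k n
    _ = _ := by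
        simp only [wcoeff, Real.rpow_zero]
        ring

lemma summable_energyTerm (hS : IsKernel lam C S) (hs : 1 / 2 < s) (hw : InHs s w)
    (hz : InHs s z) : Summable (energyTerm S (s - 1) w z) := by
  have hs₀ : 1 / 2 < s - 0 := by simpa only [sub_zero] using hs
  exact .of_norm_bounded (((hasSumLE_triad hw hw hz hs₀).summable.add
    (hasSumLE_triad_rotate_rotate hz hw hw hs₀).summable).mul_left (C * 2 ^ s))
    (hS.norm_energyTerm_le hs hw z)

lemma norm_ofReal_mul_triad_le (hS : IsKernel lam C S)
    (hw : ∀ k, w (-k) = starRingEnd ℂ (w k)) {k n : ℤ} {A B : ℝ} (hB : 0 ≤ B)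
    (hAB : (k : ℝ) ≠ 0 → ((n - k : ℤ) : ℝ) ≠ 0 → (-n : ℝ) ≠ 0 →
      |A| / min (|(k : ℝ)| ^ lam) (min (|((n - k : ℤ) : ℝ)| ^ lam) (|(-n : ℝ)| ^ lam)) ≤ B) :
    ‖(A : ℂ) * (S (-k) (k - n) n * (w (-k) * w (k - n) * z n))‖ ≤
      C * (B * (‖w k‖ * ‖w (k - n)‖ * ‖z n‖)) := by
  have hsym : ‖(A : ℂ) * (S (-k) (k - n) n * (w (-k) * w (k - n) * z n))‖ =
      |A| * ‖S (-k) (k - n) n‖ * (‖w k‖ * ‖w (k - n)‖ * ‖z n‖) := by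
    simp only [norm_mul, Complex.norm_real, Real.norm_eq_abs, hw, RCLike.norm_conj, mul_assoc]
  rw [hsym, ← mul_assoc C]
  refine mul_le_mul_of_nonneg_right ?_ (by positivity)
  by_cases h : -k * (k - n) * n = 0
  · rw [hS.eq_zero _ _ _ h, norm_zero, mul_zero]
    exact mul_nonneg hS.C_nonneg hB
  obtain ⟨⟨hk, hm⟩, hn⟩ : (-k ≠ 0 ∧ k - n ≠ 0) ∧ n ≠ 0 := by simpa only [mul_ne_zero_iff] using h
  refine hS.mul_norm_le h (abs_nonneg A) ?_
  have hbound := hAB (by simpa using hk) (by simpa [sub_eq_zero, eq_comm] using hm)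
    (by simpa using hn)
  rwa [← neg_sub k n, Int.cast_neg, abs_neg, abs_neg, ← abs_neg (k : ℝ), ← Int.cast_neg] at hbound

lemma energyTerm_add_flip (hS : IsKernel lam C S) (ρ : ℝ) (w z : ℤ → ℂ) (k n : ℤ) :
    energyTerm S ρ w z (k, n) + energyTerm S ρ w z (flipFreq (k, n)) =
      ((oddPow ρ k + oddPow ρ (n - k : ℤ) : ℝ) : ℂ) *
        (S (-k) (k - n) n * (w (-k) * w (k - n) * z n)) := by
  simp only [energyTerm, flipFreq, Equiv.coe_fn_mk]
  rw [neg_sub, sub_sub_cancel_left, hS.swap (k - n), hS.rotate (k - n), hS.rotate n]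
  push_cast
  ring

lemma energyTerm_add_rotate (hS : IsKernel lam C S) (ρ : ℝ) (u : ℤ → ℂ) (k n : ℤ) :
    energyTerm S ρ u u (k, n) + energyTerm S ρ u u (rotateFreq (k, n)) +
        energyTerm S ρ u u (rotateFreq (rotateFreq (k, n))) =
      ((oddPow ρ k + oddPow ρ (n - k : ℤ) + oddPow ρ (-n) : ℝ) : ℂ) *
        (S (-k) (k - n) n * (u (-k) * u (k - n) * u n)) := by
  simp only [energyTerm, rotateFreq, Equiv.coe_fn_mk]
  rw [show -k - (n - k) = -n by ring, show n - k - -k = n by ring,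
    show -n - -(n - k) = -k by ring, neg_sub, neg_neg, ← hS.rotate (-k), hS.rotate n]
  push_cast
  ring

/-- Exchanging the two frequencies carried by `w` makes the differences
`k |k| ^ (2s - 2) + m |m| ^ (2s - 2)` appear, and their cancellation compensates the derivative. -/
theorem norm_tsum_energyTerm_sub_one_le (hS : IsKernel lam C S) (hs : 1 / 2 < s)
    (hslam : 1 / 2 < s + lam - 1) (hw : InHs s w) (hz : InHs s z) :
    2 * ‖∑' p, energyTerm S (s - 1) w z p‖ ≤
      3 * (C * commConst s * Mconst (s + lam - 1)) * (hnorm (s - 1) w ^ 2 * hnorm s z) := by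
  have hT := hS.summable_energyTerm hs hw hz
  have hsym : 2 * ∑' p, energyTerm S (s - 1) w z p =
      ∑' p, (energyTerm S (s - 1) w z p + energyTerm S (s - 1) w z (flipFreq p)) := by
    have hflip : Summable fun p => energyTerm S (s - 1) w z (flipFreq p) :=
      flipFreq.summable_iff.2 hT
    rw [hT.tsum_add hflip, flipFreq.tsum_eq, two_mul]
  have hw' : InHs (s - 1) w := hw.mono (by linarith)
  have h₁ := hasSumLE_triad hw' hw' hz (ρ := 1 - lam) (by linarith)
  have h₂ := hasSumLE_triad_rotate hw' hz hw' (ρ := -lam) (by linarith)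
  have h₃ := hasSumLE_triad_rotate_rotate hz hw' hw' (ρ := -lam) (by linarith)
  have hcomm := commConst_nonneg hs
  have hbound := (((h₁.add h₂).add h₃).const_mul hcomm).const_mul hS.C_nonneg
  rw [show s - (1 - lam) = s + lam - 1 by ring, show s - 1 - -lam = s + lam - 1 by ring] at hbound
  rw [← Complex.norm_two, ← norm_mul, hsym]
  refine (hbound.norm_tsum_le ?_).trans_eq (by ring)
  rintro ⟨k, n⟩
  rw [hS.energyTerm_add_flip]
  refine (hS.norm_ofReal_mul_triad_le hw.2.1 (by positivity) fun hk hm hn =>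
    oddPow_add_div_min_le hs hS.lam_nonneg hk hm hn (by push_cast; ring)).trans_eq ?_
  rw [← neg_sub k n, Int.cast_neg, abs_neg, abs_neg]
  simp only [wcoeff]
  ring

lemma energyConst_nonneg (hS : IsKernel lam C S) (hcs : CubicSymbolBound lam s Cs) (hs : 0 < s) :
    0 ≤ energyConst lam s C Cs :=
  mul_nonneg (mul_nonneg hS.C_nonneg (hcs.pos hs).le) (Mconst_nonneg _)

theorem norm_tsum_energyTerm_self_le (hS : IsKernel lam C S) (hs : 0 < s)
    (hslam : 1 / 2 < s + lam - 1) (hcs : CubicSymbolBound lam s Cs) (hu : InHs s u)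
    (hT : Summable (energyTerm S s u u)) :
    ‖∑' p, energyTerm S s u u p‖ ≤ energyConst lam s C Cs * hnorm s u ^ 3 := by
  have hT₁ : Summable fun p => energyTerm S s u u (rotateFreq p) := rotateFreq.summable_iff.2 hT
  have hT₂ : Summable fun p => energyTerm S s u u (rotateFreq (rotateFreq p)) :=
    rotateFreq.summable_iff.2 hT₁
  have hsym : 3 * ∑' p, energyTerm S s u u p =
      ∑' p, (energyTerm S s u u p + energyTerm S s u u (rotateFreq p) +
        energyTerm S s u u (rotateFreq (rotateFreq p))) := by
    rw [(hT.add hT₁).tsum_add hT₂, hT.tsum_add hT₁,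
      rotateFreq.tsum_eq fun p => energyTerm S s u u (rotateFreq p), rotateFreq.tsum_eq]
    ring
  have h : 1 / 2 < s - (1 - lam) := by linarith
  have hCs := hcs.pos hs
  have hbound := ((((hasSumLE_triad hu hu hu h).add (hasSumLE_triad_rotate hu hu hu h)).add
    (hasSumLE_triad_rotate_rotate hu hu hu h)).const_mul hCs.le).const_mul hS.C_nonneg
  rw [show s - (1 - lam) = s + lam - 1 by ring] at hbound
  suffices h3 : 3 * ‖∑' p, energyTerm S s u u p‖ ≤
      3 * (energyConst lam s C Cs * hnorm s u ^ 3) by linarith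
  rw [← RCLike.norm_ofNat (K := ℂ) 3, ← norm_mul, hsym]
  refine (hbound.norm_tsum_le ?_).trans_eq (by rw [RCLike.norm_ofNat, energyConst]; ring)
  rintro ⟨k, n⟩
  rw [hS.energyTerm_add_rotate]
  refine (hS.norm_ofReal_mul_triad_le hu.2.1 (by positivity) fun hk hm hn =>
    hcs _ _ _ hk hm hn (by push_cast; ring)).trans_eq ?_
  rw [← neg_sub k n, Int.cast_neg, abs_neg, abs_neg]
  simp only [wcoeff]
  ring

end IsKernel

end EnergyEstimate

/-! ### Two-sided differential inequalities -/

section DifferentialInequality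

variable {T K t : ℝ}

lemma norm_sub_le_mul_abs_of_norm_deriv_le {E : Type*} [NormedAddCommGroup E] [NormedSpace ℝ E]
    {g g' : ℝ → E} (hg : ∀ τ, |τ| < T → HasDerivAt g (g' τ) τ)
    (hK : ∀ τ, |τ| < T → ‖g' τ‖ ≤ K) (ht : |t| < T) : ‖g t - g 0‖ ≤ K * |t| := by
  have h₀ : (0 : ℝ) ∈ Set.Ioo (-T) T := abs_lt.1 (by simpa using (abs_nonneg t).trans_lt ht)
  simpa using (convex_Ioo (-T) T).norm_image_sub_le_of_norm_hasDerivWithin_le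
    (fun τ hτ => (hg τ (abs_lt.2 hτ)).hasDerivWithinAt) (fun τ hτ => hK τ (abs_lt.2 hτ)) h₀
    (abs_lt.1 ht)

lemma le_mul_exp_of_abs_deriv_le {F F' : ℝ → ℝ} (hF : ∀ τ, |τ| < T → HasDerivAt F (F' τ) τ)
    (hpos : ∀ τ, 0 < F τ) (hK : ∀ τ, |τ| < T → |F' τ| ≤ K * F τ) (ht : |t| < T) :
    F t ≤ F 0 * Real.exp (K * |t|) := by
  have hlog := norm_sub_le_mul_abs_of_norm_deriv_le (fun τ hτ => (hF τ hτ).log (hpos τ).ne')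
    (fun τ hτ => by
      rw [Real.norm_eq_abs, abs_div, abs_of_pos (hpos τ)]
      exact (div_le_iff₀ (hpos τ)).2 (hK τ hτ)) ht
  rw [← Real.exp_log (hpos t), ← Real.exp_log (hpos 0), ← Real.exp_add, Real.exp_le_exp]
  linarith [(abs_le.1 hlog).2]

/-- The function `E ^ (-1/2)` is `K`-Lipschitz; adding `ε` keeps it finite where `E` vanishes. -/
lemma sqrt_mul_one_sub_le_of_abs_deriv_le {E E' : ℝ → ℝ} (hK₀ : 0 ≤ K)
    (hE : ∀ τ, |τ| < T → HasDerivAt E (E' τ) τ) (hnn : ∀ τ, 0 ≤ E τ)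
    (hK : ∀ τ, |τ| < T → |E' τ| ≤ 2 * K * √(E τ) ^ 3) (ht : |t| < T) :
    √(E t) * (1 - K * √(E 0) * |t|) ≤ √(E 0) := by
  have hε (ε : ℝ) (hε : 0 < ε) :
      √(E t + ε) * (1 - K * √(E 0 + ε) * |t|) ≤ √(E 0 + ε) := by
    have hpos (τ : ℝ) : 0 < √(E τ + ε) := Real.sqrt_pos.2 (by linarith [hnn τ])
    have hderiv (τ : ℝ) (hτ : |τ| < T) := (((hE τ hτ).add_const ε).sqrt
      (by linarith [hnn τ])).inv (hpos τ).ne'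
    have hinv := norm_sub_le_mul_abs_of_norm_deriv_le (K := K) hderiv (fun τ hτ => by
      have hle : √(E τ) ≤ √(E τ + ε) := Real.sqrt_le_sqrt (by linarith)
      have hpos := hpos τ
      rw [Real.norm_eq_abs, abs_div, abs_neg, abs_div, abs_of_pos (by positivity : 0 < 2 * √_),
        abs_of_pos (by positivity : 0 < √_ ^ 2), div_div, div_le_iff₀ (by positivity)]
      calc |E' τ| ≤ 2 * K * √(E τ) ^ 3 := hK τ hτ
        _ ≤ 2 * K * √(E τ + ε) ^ 3 := by gcongr
        _ = K * (2 * √(E τ + ε) * √(E τ + ε) ^ 2) := by ring) ht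
    have hlow := (abs_le.1 hinv).1
    rw [Pi.inv_apply, Pi.inv_apply, inv_sub_inv (hpos t).ne' (hpos 0).ne',
      le_div_iff₀ (mul_pos (hpos t) (hpos 0))] at hlow
    linarith
  have hlim : Tendsto (fun ε => √(E t + ε) * (1 - K * √(E 0 + ε) * |t|)) (nhdsWithin 0 (Set.Ioi 0))
      (nhds (√(E t) * (1 - K * √(E 0) * |t|))) := by
    refine Tendsto.mono_left (Continuous.tendsto' (by fun_prop) _ _ ?_) nhdsWithin_le_nhds
    simp only [add_zero]
  have hlim₀ : Tendsto (fun ε => √(E 0 + ε)) (nhdsWithin 0 (Set.Ioi 0)) (nhds √(E 0)) :=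
    (Continuous.tendsto' (by fun_prop) _ _ (by rw [add_zero])).mono_left nhdsWithin_le_nhds
  exact le_of_tendsto_of_tendsto hlim hlim₀ (eventually_mem_nhdsWithin.mono hε)

end DifferentialInequality

/-! ### Comparison of approximate solutions -/

/-- The frequencies `|k| ≤ N` retained by the `N`-th Galerkin truncation. -/
noncomputable def window (N : ℕ) : Finset ℤ := Finset.Icc (-N) N

/-- A curve that is bounded by `B` in `Ḣ^s` for `|t| < T` and there satisfies the components of the
equation at the frequencies in `F`. Galerkin approximations have `F = window N`, and exact solutions
have `F = Set.univ`. -/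
structure BoundedSolOn (S : ℤ → ℤ → ℤ → ℂ) (s : ℝ) (F : Set ℤ) (T B : ℝ) (u : ℝ → ℤ → ℂ) :
    Prop where
  inHs : ∀ t, |t| < T → InHs s (u t)
  hnorm_le : ∀ t, |t| < T → hnorm s (u t) ≤ B
  hasDerivAt : ∀ t, |t| < T → ∀ k ∈ F,
    HasDerivAt (fun τ => u τ k) (vectorField S (u t) k) t

/-- The exponential rate at which two solutions bounded by `B` in `Ḣ^s` can separate in
`Ḣ^{s-1}`. -/
noncomputable def separationRate (lam s C B : ℝ) : ℝ :=
  6 * (C * commConst s * Mconst (s + lam - 1)) * B + 4 * algConst s C * B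

section Comparison

variable {lam s C T B : ℝ} {S : ℤ → ℤ → ℤ → ℂ} {w z : ℤ → ℂ} {u v : ℝ → ℤ → ℂ} {N : ℕ} {k : ℤ}

lemma HasSumLE.norm_tsum_sub_sum_le {ι E : Type*} [NormedAddCommGroup E] [CompleteSpace E]
    {b : ι → ℝ} (hb : HasSumLE b B) (hb₀ : ∀ i, 0 ≤ b i) {f : ι → E} (hf : Summable f)
    (F : Finset ι) (hle : ∀ i ∉ F, ‖f i‖ ≤ b i) : ‖∑' i, f i - ∑ i ∈ F, f i‖ ≤ B := by
  rw [← hf.sum_add_tsum_compl (s := F), add_sub_cancel_left]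
  have hcompl : HasSumLE (fun i : ((F : Set ι)ᶜ : Set ι) => b i) B :=
    ⟨hb.summable.subtype _, (hb.summable.tsum_subtype_le b _ hb₀).trans hb.tsum_le⟩
  exact hcompl.norm_tsum_le fun i => hle i i.2

lemma mem_window : k ∈ window N ↔ |k| ≤ N := by
  rw [window, Finset.mem_Icc, abs_le]

lemma add_one_le_abs_of_notMem_window (hk : k ∉ window N) : (N + 1 : ℝ) ≤ |(k : ℝ)| := by
  rw [mem_window, not_le] at hk
  exact_mod_cast hk

lemma hnorm_sub_one_sq_le (hw : InHs s w) (N : ℕ) : hnorm (s - 1) w ^ 2 ≤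
    (∑ k ∈ window N, wcoeff (s - 1) w k ^ 2) + (N + 1 : ℝ)⁻¹ * hnorm s w ^ 2 := by
  have htail := (hw.hasSumLE_wcoeff_sq.const_mul (by positivity : 0 ≤ (N + 1 : ℝ)⁻¹))
    |>.norm_tsum_sub_sum_le (fun _ => by positivity)
      (hw.mono (by linarith : s - 1 ≤ s)).hasSumLE_wcoeff_sq.summable (window N) fun k hk => by
    have hkN := add_one_le_abs_of_notMem_window hk
    have hshift : |(k : ℝ)| * wcoeff (s - 1) w k = wcoeff s w k := by
      simpa using rpow_mul_wcoeff (σ := 1) (ρ := s - 1) hw.1 k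
    rw [Real.norm_of_nonneg (sq_nonneg _), ← hshift, mul_pow, ← mul_assoc]
    refine le_mul_of_one_le_left (sq_nonneg _) ?_
    rw [inv_mul_eq_div, one_le_div (by positivity)]
    nlinarith
  rw [← hnorm_sq] at htail
  linarith [(abs_le.1 htail).2]

lemma abs_mul_norm_energyRate (hw : InHs s w) (z : ℤ → ℂ) (k : ℤ) :
    |(k : ℝ)| * ‖energyRate S (s - 1) w z k‖ = wcoeff s w k * wcoeff s (aHat S w z) k := by
  rcases eq_or_ne k 0 with rfl | hk
  · simp [wcoeff, hw.1]
  have hk₀ := abs_intCast_pos hk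
  have hpow : |(k : ℝ)| * |(k : ℝ)| ^ (2 * (s - 1) + 1) = |(k : ℝ)| ^ s * |(k : ℝ)| ^ s := by
    rw [mul_comm, ← Real.rpow_add_one hk₀.ne', ← Real.rpow_add hk₀]
    ring_nf
  rw [energyRate, norm_mul, norm_mul, Complex.norm_real, Real.norm_eq_abs,
    abs_oddPow _ (Int.cast_ne_zero.2 hk), hw.2.1, RCLike.norm_conj, ← mul_assoc, hpow, wcoeff,
    wcoeff]
  ring

namespace IsKernel

lemma norm_sum_energyRate_le (hS : IsKernel lam C S) (hs : 1 / 2 < s)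
    (hslam : 1 / 2 < s + lam - 1) (hw : InHs s w) (hz : InHs s z) (N : ℕ) :
    2 * ‖∑ k ∈ window N, energyRate S (s - 1) w z k‖ ≤
      3 * (C * commConst s * Mconst (s + lam - 1)) * (hnorm (s - 1) w ^ 2 * hnorm s z) +
        2 * ((N + 1 : ℝ)⁻¹ * (hnorm s w * hnorm s (aHat S w z))) := by
  have hsum := hasSum_energyRate (hS.summable_energyTerm hs hw hz)
  have hbound := (hw.hasSumLE_wcoeff_sq.mul_of_sq (hS.inHs_aHat hs hw hz).hasSumLE_wcoeff_sq
    (hnorm_nonneg _ _) (hnorm_nonneg _ _) (wcoeff_nonneg _ _) (wcoeff_nonneg _ _)).const_mul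
    (by positivity : 0 ≤ (N + 1 : ℝ)⁻¹)
  have htail := hbound.norm_tsum_sub_sum_le
    (fun k => mul_nonneg (by positivity) (mul_nonneg (wcoeff_nonneg _ _ _) (wcoeff_nonneg _ _ _)))
    hsum.summable (window N) fun k hk => by
      rw [← abs_mul_norm_energyRate hw, ← mul_assoc]
      refine le_mul_of_one_le_left (norm_nonneg _) ?_
      rw [inv_mul_eq_div, one_le_div (by positivity)]
      exact add_one_le_abs_of_notMem_window hk
  rw [hsum.tsum_eq, norm_sub_rev] at htail
  have htri := (norm_sub_norm_le _ _).trans htail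
  linarith [hS.norm_tsum_energyTerm_sub_one_le hs hslam hw hz]

lemma abs_sum_energyRate_le (hS : IsKernel lam C S) (hs : 1 / 2 < s)
    (hslam : 1 / 2 < s + lam - 1) (hw : InHs s w) (hz : InHs s z) (hwB : hnorm s w ≤ 2 * B)
    (hzB : hnorm s z ≤ 2 * B) (N : ℕ) :
    |2 * (∑ k ∈ window N, energyRate S (s - 1) w z k).im| ≤ separationRate lam s C B *
      ((∑ k ∈ window N, wcoeff (s - 1) w k ^ 2) + (N + 1 : ℝ)⁻¹ * (2 * B) ^ 2) := by
  set δ : ℝ := (N + 1 : ℝ)⁻¹ * (2 * B) ^ 2 with hδ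
  set E : ℝ := ∑ k ∈ window N, wcoeff (s - 1) w k ^ 2
  have hB : 0 ≤ 2 * B := (hnorm_nonneg s w).trans hwB
  have : 0 ≤ E := Finset.sum_nonneg fun _ _ => sq_nonneg _
  have hcomm : 0 ≤ C * commConst s * Mconst (s + lam - 1) :=
    mul_nonneg (mul_nonneg hS.C_nonneg (commConst_nonneg hs)) (Mconst_nonneg _)
  have halg := hS.algConst_nonneg s
  have hlow : hnorm (s - 1) w ^ 2 ≤ E + δ :=
    (hnorm_sub_one_sq_le hw N).trans (add_le_add_right (mul_le_mul_of_nonneg_left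
      (pow_le_pow_left₀ (hnorm_nonneg s w) hwB 2) (by positivity)) _)
  have hprod : hnorm s (aHat S w z) ≤ algConst s C * (2 * B * (2 * B)) :=
    (hS.hnorm_aHat_le hs hw hz).trans
      (mul_le_mul_of_nonneg_left (mul_le_mul hwB hzB (hnorm_nonneg s z) hB) halg)
  calc |2 * (∑ k ∈ window N, energyRate S (s - 1) w z k).im|
      ≤ 2 * ‖∑ k ∈ window N, energyRate S (s - 1) w z k‖ := by
        rw [abs_mul, abs_two]
        exact mul_le_mul_of_nonneg_left (Complex.abs_im_le_norm _) zero_le_two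
    _ ≤ 3 * (C * commConst s * Mconst (s + lam - 1)) * (hnorm (s - 1) w ^ 2 * hnorm s z) +
          2 * ((N + 1 : ℝ)⁻¹ * (hnorm s w * hnorm s (aHat S w z))) :=
        hS.norm_sum_energyRate_le hs hslam hw hz N
    _ ≤ 3 * (C * commConst s * Mconst (s + lam - 1)) * ((E + δ) * (2 * B)) +
          2 * ((N + 1 : ℝ)⁻¹ * (2 * B * (algConst s C * (2 * B * (2 * B))))) := by
        gcongr
        exacts [hnorm_nonneg s z, hnorm_nonneg s (aHat S w z)]
    _ = separationRate lam s C B * (E + δ) - 2 * algConst s C * (2 * B) * E := by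
        rw [separationRate, hδ]
        ring
    _ ≤ separationRate lam s C B * (E + δ) := sub_le_self _ (by positivity)

lemma hasDerivAt_sum_wcoeff_sub_sq (hS : IsKernel lam C S) (hs : 1 / 2 < s) (ρ : ℝ)
    (hu : BoundedSolOn S s (window N) T B u) (hv : BoundedSolOn S s (window N) T B v) {t : ℝ}
    (ht : |t| < T) : HasDerivAt (fun τ => ∑ k ∈ window N, wcoeff ρ (u τ - v τ) k ^ 2)
      (2 * (∑ k ∈ window N, energyRate S ρ (u t - v t) (u t + v t) k).im) t := by
  have hut := hu.inHs t ht
  have hvt := hv.inHs t ht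
  rw [Complex.im_sum, Finset.mul_sum]
  refine HasDerivAt.fun_sum fun k hk =>
    hasDerivAt_wcoeff_sq ρ (w := fun τ => u τ - v τ) ((hut.sub hvt).2.1 k) ?_
  rw [← hS.vectorField_sub hs hut hvt]
  exact (hu.hasDerivAt t ht k hk).sub (hv.hasDerivAt t ht k hk)

theorem hnorm_sub_sq_le (hS : IsKernel lam C S) (hs : 1 / 2 < s) (hslam : 1 / 2 < s + lam - 1)
    (hB : 0 < B) (hu : BoundedSolOn S s (window N) T B u) (hv : BoundedSolOn S s (window N) T B v)
    (h0 : ∀ k ∈ window N, u 0 k = v 0 k) {t : ℝ} (ht : |t| < T) :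
    hnorm (s - 1) (u t - v t) ^ 2 ≤
      (N + 1 : ℝ)⁻¹ * (2 * B) ^ 2 * Real.exp (separationRate lam s C B * |t|) := by
  set δ : ℝ := (N + 1 : ℝ)⁻¹ * (2 * B) ^ 2
  have hδ : 0 < δ := by positivity
  have hw (τ : ℝ) (hτ : |τ| < T) := (hu.inHs τ hτ).sub (hv.inHs τ hτ)
  have hz (τ : ℝ) (hτ : |τ| < T) := (hu.inHs τ hτ).add (hv.inHs τ hτ)
  have hwB (τ : ℝ) (hτ : |τ| < T) : hnorm s (u τ - v τ) ≤ 2 * B := by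
    linarith [(hu.inHs τ hτ).hnorm_sub_le (hv.inHs τ hτ), hu.hnorm_le τ hτ, hv.hnorm_le τ hτ]
  have hzB (τ : ℝ) (hτ : |τ| < T) : hnorm s (u τ + v τ) ≤ 2 * B := by
    linarith [(hu.inHs τ hτ).hnorm_add_le (hv.inHs τ hτ), hu.hnorm_le τ hτ, hv.hnorm_le τ hτ]
  have hgrowth := le_mul_exp_of_abs_deriv_le
    (F := fun τ => (∑ k ∈ window N, wcoeff (s - 1) (u τ - v τ) k ^ 2) + δ)
    (fun τ hτ => (hS.hasDerivAt_sum_wcoeff_sub_sq hs (s - 1) hu hv hτ).add_const δ)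
    (fun τ => add_pos_of_nonneg_of_pos (Finset.sum_nonneg fun _ _ => sq_nonneg _) hδ)
    (fun τ hτ => hS.abs_sum_energyRate_le hs hslam (hw τ hτ) (hz τ hτ) (hwB τ hτ) (hzB τ hτ) N) ht
  have hstart : ∑ k ∈ window N, wcoeff (s - 1) (u 0 - v 0) k ^ 2 = 0 :=
    Finset.sum_eq_zero fun k hk => by simp [wcoeff, h0 k hk]
  simp only [hstart, zero_add] at hgrowth
  exact ((hnorm_sub_one_sq_le (hw t ht) N).trans (add_le_add_right (mul_le_mul_of_nonneg_left
    (pow_le_pow_left₀ (hnorm_nonneg _ _) (hwB t ht) 2) (by positivity)) _)).trans hgrowth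

end IsKernel

end Comparison

/-! ### Galerkin approximations -/

lemma exists_hasDerivAt_of_hasCompactSupport {E : Type*} [NormedAddCommGroup E] [NormedSpace ℝ E]
    [CompleteSpace E] {G : E → E} (hG : ContDiff ℝ 1 G) (hc : HasCompactSupport G) (x₀ : E)
    {T : ℝ} (hT : 0 < T) : ∃ x : ℝ → E, x 0 = x₀ ∧ ∀ t, |t| < T → HasDerivAt x (G (x t)) t := by
  obtain ⟨L, hL⟩ := hG.lipschitzWith_of_hasCompactSupport hc one_ne_zero
  obtain ⟨M, hM⟩ := hc.exists_bound_of_continuous hG.continuous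
  have hM₀ : 0 ≤ M := (norm_nonneg _).trans (hM x₀)
  lift M to NNReal using hM₀
  lift T to NNReal using hT.le
  have hpicard : IsPicardLindelof (fun _ => G) (tmin := -T) (tmax := T)
      ⟨0, by simp, hT.le⟩ x₀ (M * T) 0 M L :=
    .of_time_independent (fun y _ => hM y) hL.lipschitzOnWith (by simp)
  obtain ⟨x, hx₀, hx⟩ := hpicard.exists_eq_forall_mem_Icc_hasDerivWithinAt₀
  refine ⟨x, hx₀, fun t ht => ?_⟩
  obtain ⟨hl, hr⟩ := abs_lt.1 ht
  exact (hx t ⟨hl.le, hr.le⟩).hasDerivAt (Icc_mem_nhds hl hr)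

/-- The complex coordinates of a real zero-mean trigonometric polynomial of degree at most `N`: its
coefficients at the positive frequencies. -/
abbrev ModeSpace (N : ℕ) : Type := Finset.Icc (1 : ℤ) N → ℂ

/-- The Fourier coefficients of the real trigonometric polynomial with coordinates `x`. -/
noncomputable def trigPoly {N : ℕ} (x : ModeSpace N) (k : ℤ) : ℂ :=
  if h : k ∈ Finset.Icc (1 : ℤ) N then x ⟨k, h⟩ else
    if h : -k ∈ Finset.Icc (1 : ℤ) N then starRingEnd ℂ (x ⟨-k, h⟩) else 0

section TrigPoly

variable {N : ℕ} {s ρ : ℝ} {S : ℤ → ℤ → ℤ → ℂ}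

lemma window_induction {p : ℤ → Prop} (zero : p 0) (neg : ∀ k, p k → p (-k))
    (pos : ∀ k ∈ Finset.Icc (1 : ℤ) N, p k) : ∀ k ∈ window N, p k := by
  intro k hk
  obtain ⟨hl, hr⟩ := abs_le.1 (mem_window.1 hk)
  rcases lt_trichotomy k 0 with h | rfl | h
  · exact neg_neg k ▸ neg _ (pos _ (Finset.mem_Icc.2 (by omega)))
  · exact zero
  · exact pos k (Finset.mem_Icc.2 ⟨h, hr⟩)

lemma trigPoly_coe (x : ModeSpace N) (k : Finset.Icc (1 : ℤ) N) : trigPoly x k = x k :=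
  dif_pos k.2

lemma trigPoly_zero (x : ModeSpace N) : trigPoly x 0 = 0 := by
  simp [trigPoly]

lemma trigPoly_neg (x : ModeSpace N) (k : ℤ) : trigPoly x (-k) = starRingEnd ℂ (trigPoly x k) := by
  by_cases h : k ∈ Finset.Icc (1 : ℤ) N
  · have h' : -k ∉ Finset.Icc (1 : ℤ) N := by
      rw [Finset.mem_Icc] at h ⊢
      omega
    simp [trigPoly, h, h']
  · by_cases h' : -k ∈ Finset.Icc (1 : ℤ) N <;> simp [trigPoly, h, h']

lemma trigPoly_of_notMem_window (x : ModeSpace N) {k : ℤ} (hk : k ∉ window N) :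
    trigPoly x k = 0 := by
  rw [mem_window, abs_le] at hk
  have hpos : k ∉ Finset.Icc (1 : ℤ) N := by
    rw [Finset.mem_Icc]
    omega
  have hneg : -k ∉ Finset.Icc (1 : ℤ) N := by
    rw [Finset.mem_Icc]
    omega
  rw [trigPoly, dif_neg hpos, dif_neg hneg]

lemma wcoeff_trigPoly_of_notMem_window (x : ModeSpace N) {k : ℤ} (hk : k ∉ window N) :
    wcoeff ρ (trigPoly x) k = 0 := by
  rw [wcoeff, trigPoly_of_notMem_window x hk, norm_zero, mul_zero]

lemma inHs_trigPoly (ρ : ℝ) (x : ModeSpace N) : InHs ρ (trigPoly x) :=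
  inHs_iff_summable_wcoeff_sq.2 ⟨trigPoly_zero x, trigPoly_neg x,
    summable_of_ne_finset_zero (s := window N) fun k hk => by
      rw [wcoeff_trigPoly_of_notMem_window x hk, zero_pow two_ne_zero]⟩

lemma hnorm_trigPoly_sq (ρ : ℝ) (x : ModeSpace N) :
    hnorm ρ (trigPoly x) ^ 2 = ∑ k ∈ window N, wcoeff ρ (trigPoly x) k ^ 2 := by
  rw [hnorm_sq]
  refine tsum_eq_sum fun k hk => ?_
  rw [wcoeff_trigPoly_of_notMem_window x hk, zero_pow two_ne_zero]

lemma hnorm_trigPoly_le {x : ModeSpace N} {f : ℤ → ℂ} (hf : InHs ρ f)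
    (h : ∀ k ∈ window N, trigPoly x k = f k) : hnorm ρ (trigPoly x) ≤ hnorm ρ f := by
  rw [← sq_le_sq₀ (hnorm_nonneg _ _) (hnorm_nonneg _ _), hnorm_trigPoly_sq, hnorm_sq]
  refine le_trans (Finset.sum_le_sum fun k hk => ?_)
    (hf.hasSumLE_wcoeff_sq.summable.sum_le_tsum (window N) fun k _ => sq_nonneg _)
  rw [wcoeff, wcoeff, h k hk]

lemma norm_le_hnorm_trigPoly (hs : 0 ≤ s) (x : ModeSpace N) : ‖x‖ ≤ hnorm s (trigPoly x) := by
  refine (pi_norm_le_iff_of_nonneg (hnorm_nonneg _ _)).2 fun k => ?_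
  calc ‖x k‖ = wcoeff 0 (trigPoly x) k := by simp only [wcoeff_order_zero, trigPoly_coe]
    _ ≤ hnorm 0 (trigPoly x) := (inHs_trigPoly 0 x).wcoeff_le_hnorm k
    _ ≤ hnorm s (trigPoly x) := (inHs_trigPoly s x).hnorm_mono hs

lemma contDiff_trigPoly (k : ℤ) : ContDiff ℝ 1 fun x : ModeSpace N => trigPoly x k := by
  unfold trigPoly
  split_ifs with h h'
  · exact contDiff_apply ℝ ℂ _
  · exact Complex.conjCLE.contDiff.comp (contDiff_apply ℝ ℂ _)
  · exact contDiff_const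

lemma contDiff_vectorField_trigPoly (k : ℤ) :
    ContDiff ℝ 1 fun x : ModeSpace N => vectorField S (trigPoly x) k := by
  have hfin (x : ModeSpace N) : aHat S (trigPoly x) (trigPoly x) k =
      ∑ n ∈ window N, S (-k) (k - n) n * trigPoly x (k - n) * trigPoly x n :=
    tsum_eq_sum fun n hn => by rw [trigPoly_of_notMem_window x hn, mul_zero]
  simp only [vectorField, negDeriv, hfin]
  exact (contDiff_const.mul (ContDiff.sum fun n _ =>
    (contDiff_const.mul (contDiff_trigPoly _)).mul (contDiff_trigPoly _))).neg

lemma aHat_smul_right (c : ℂ) (u v : ℤ → ℂ) : aHat S u (c • v) = c • aHat S u v := by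
  funext k
  simp only [aHat, Pi.smul_apply, smul_eq_mul, ← tsum_mul_left]
  exact tsum_congr fun n => by ring

lemma energyRate_smul_right (c : ℂ) (u v : ℤ → ℂ) :
    energyRate S ρ u (c • v) = c • energyRate S ρ u v := by
  funext k
  simp only [energyRate, aHat_smul_right, Pi.smul_apply, smul_eq_mul]
  ring

end TrigPoly

/-- A curve `x` of trigonometric polynomials that follows for `|t| < T` the `N`-th Galerkin system
with its right-hand side multiplied by a cutoff `θ ∈ [0, 1]`, which is `1` when `‖x‖ ≤ R`. -/
structure IsCutoffFlow (S : ℤ → ℤ → ℤ → ℂ) {N : ℕ} (R T : ℝ) (x : ℝ → ModeSpace N) (θ : ℝ → ℝ) :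
    Prop where
  nonneg : ∀ t, 0 ≤ θ t
  le_one : ∀ t, θ t ≤ 1
  eq_one : ∀ t, ‖x t‖ ≤ R → θ t = 1
  hasDerivAt : ∀ t, |t| < T → ∀ k ∈ window N, HasDerivAt (fun τ => trigPoly (x τ) k)
    (θ t * vectorField S (trigPoly (x t)) k) t

/-- For `|t| < T` the `Ḣ^s` norm of `u` stays below the solution `A / (1 - K * A * |t|)` of the
Riccati equation `y' = K * y ^ 2`, `y 0 = A`. -/
def GrowthBound (s K A T : ℝ) (u : ℝ → ℤ → ℂ) : Prop :=
  ∀ t, |t| < T → hnorm s (u t) * (1 - K * A * |t|) ≤ A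

namespace GrowthBound

variable {s K A A' T T' t : ℝ} {u : ℝ → ℤ → ℂ}

lemma mono (h : GrowthBound s K A T u) (hK : 0 ≤ K) (hA : A ≤ A') : GrowthBound s K A' T u := by
  intro t ht
  refine le_trans (mul_le_mul_of_nonneg_left ?_ (hnorm_nonneg _ _)) ((h t ht).trans hA)
  gcongr

lemma hnorm_le (h : GrowthBound s K A T u) (hK : 0 ≤ K) (hA : 0 ≤ A) (hT' : K * A * T' < 1)
    (ht : |t| < T) (htT' : |t| ≤ T') : hnorm s (u t) ≤ A / (1 - K * A * T') := by
  refine (le_div_iff₀ (sub_pos.2 hT')).2 (le_trans ?_ (h t ht))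
  refine mul_le_mul_of_nonneg_left ?_ (hnorm_nonneg _ _)
  gcongr

end GrowthBound

section Galerkin

variable {lam s C Cs R T : ℝ} {S : ℤ → ℤ → ℤ → ℂ} {N : ℕ} {f : ℤ → ℂ}

theorem IsKernel.exists_isCutoffFlow (hS : IsKernel lam C S) (hf : InHs s f) (N : ℕ) (hR : 0 < R)
    (hT : 0 < T) : ∃ (x : ℝ → ModeSpace N) (θ : ℝ → ℝ), IsCutoffFlow S R T x θ ∧
      ∀ k ∈ window N, trigPoly (x 0) k = f k := by
  let χ : ContDiffBump (0 : ModeSpace N) := ⟨R, R + 1, hR, lt_add_one R⟩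
  let G (x : ModeSpace N) (k : Finset.Icc (1 : ℤ) N) : ℂ := χ x * vectorField S (trigPoly x) k
  have hG : ContDiff ℝ 1 G := contDiff_pi.2 fun k =>
    (Complex.ofRealCLM.contDiff.comp χ.contDiff).mul (contDiff_vectorField_trigPoly _)
  have hGc : HasCompactSupport G := χ.hasCompactSupport.mono <| Function.support_subset_iff'.2
    fun x hx => funext fun k => by simp [G, Function.notMem_support.1 hx]
  obtain ⟨x, hx₀, hx⟩ := exists_hasDerivAt_of_hasCompactSupport hG hGc (fun k => f k) hT
  refine ⟨x, fun t => χ (x t), ⟨fun t => χ.nonneg, fun t => χ.le_one, fun t ht =>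
    χ.one_of_mem_closedBall (mem_closedBall_zero_iff.2 ht), fun t ht => ?_⟩, ?_⟩
  · refine window_induction ?_ (fun k hk => ?_) fun k hk => ?_
    · simpa [trigPoly_zero, vectorField, negDeriv] using hasDerivAt_const t (0 : ℂ)
    · have hconj : vectorField S (trigPoly (x t)) (-k) =
          starRingEnd ℂ (vectorField S (trigPoly (x t)) k) := by
        simp [vectorField, negDeriv, hS.aHat_conj (trigPoly_neg _) (trigPoly_neg _)]
      simpa [trigPoly_neg, hconj] using hk.star
    · exact (hasDerivAt_pi.1 (hx t ht) ⟨k, hk⟩).congr_of_eventuallyEq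
        (.of_forall fun τ => trigPoly_coe (x τ) ⟨k, hk⟩)
  · refine window_induction ?_ (fun k hk => ?_) fun k hk => ?_
    · rw [trigPoly_zero, hf.1]
    · rw [trigPoly_neg, hf.2.1, hk]
    · rw [hx₀]
      exact trigPoly_coe _ ⟨k, hk⟩

namespace IsCutoffFlow

variable {x : ℝ → ModeSpace N} {θ : ℝ → ℝ}

lemma hasDerivAt_hnorm_sq (hx : IsCutoffFlow S R T x θ) {t : ℝ} (ht : |t| < T) :
    HasDerivAt (fun τ => hnorm s (trigPoly (x τ)) ^ 2)
      (θ t * (2 * (∑ k ∈ window N, energyRate S s (trigPoly (x t)) (trigPoly (x t)) k).im)) t := by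
  simp only [hnorm_trigPoly_sq]
  have hcoeff (k : ℤ) (hk : k ∈ window N) := hasDerivAt_wcoeff_sq (S := S) s
    (w := fun τ => trigPoly (x τ)) (z := (θ t : ℂ) • trigPoly (x t)) (trigPoly_neg (x t) k)
    ((hx.hasDerivAt t ht k hk).congr_deriv (by
      simp only [vectorField, negDeriv, aHat_smul_right, Pi.smul_apply, smul_eq_mul]
      ring))
  refine (HasDerivAt.fun_sum hcoeff).congr_deriv ?_
  simp only [energyRate_smul_right, Pi.smul_apply, smul_eq_mul, Complex.im_ofReal_mul,
    Complex.im_sum, Finset.mul_sum]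
  exact Finset.sum_congr rfl fun k _ => by ring

lemma growthBound (hx : IsCutoffFlow S R T x θ) (hS : IsKernel lam C S) (hs : 1 / 2 < s)
    (hslam : 1 / 2 < s + lam - 1) (hcs : CubicSymbolBound lam s Cs) :
    GrowthBound s (energyConst lam s C Cs) (hnorm s (trigPoly (x 0))) T
      fun t => trigPoly (x t) := by
  intro t ht
  have hK := hS.energyConst_nonneg hcs (by linarith)
  have hmain := sqrt_mul_one_sub_le_of_abs_deriv_le hK
    (fun τ hτ => hx.hasDerivAt_hnorm_sq (s := s) hτ) (fun τ => sq_nonneg _) (fun τ _ => ?_) ht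
  · simpa only [Real.sqrt_sq (hnorm_nonneg s _)] using hmain
  set u := trigPoly (x τ)
  have hu : InHs (s + 1) u := inHs_trigPoly _ _
  have hT : Summable (energyTerm S s u u) := by
    simpa only [add_sub_cancel_right] using hS.summable_energyTerm (by linarith) hu hu
  have hsum : ∑ k ∈ window N, energyRate S s u u k = ∑' p, energyTerm S s u u p := by
    refine (hasSum_sum_of_ne_finset_zero fun k hk => ?_).unique (hasSum_energyRate hT)
    simp [energyRate, u, trigPoly_neg, trigPoly_of_notMem_window _ hk]
  rw [Real.sqrt_sq (hnorm_nonneg s u), abs_mul, abs_of_nonneg (hx.nonneg τ), abs_mul, abs_two,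
    mul_assoc 2, hsum]
  refine (mul_le_of_le_one_left (by positivity) (hx.le_one τ)).trans
    (mul_le_mul_of_nonneg_left ((Complex.abs_im_le_norm _).trans ?_) zero_le_two)
  exact hS.norm_tsum_energyTerm_self_le (by linarith) hslam hcs (inHs_trigPoly s _) hT

end IsCutoffFlow

theorem IsKernel.exists_galerkin (hS : IsKernel lam C S) (hs : 1 / 2 < s)
    (hslam : 1 / 2 < s + lam - 1) (hcs : CubicSymbolBound lam s Cs) (hf : InHs s f) (hT : 0 < T)
    (hfT : energyConst lam s C Cs * hnorm s f * T < 1) (N : ℕ) :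
    ∃ u : ℝ → ℤ → ℂ, (∀ k ∈ window N, u 0 k = f k) ∧ (∀ t, |t| < T → InHs s (u t)) ∧
      (∀ t, |t| < T → ∀ k ∈ window N, HasDerivAt (fun τ => u τ k) (vectorField S (u t) k) t) ∧
      GrowthBound s (energyConst lam s C Cs) (hnorm s f) T u := by
  have hK := hS.energyConst_nonneg hcs (by linarith)
  have hf₀ := hnorm_nonneg s f
  set B := hnorm s f / (1 - energyConst lam s C Cs * hnorm s f * T)
  have hB : 0 ≤ B := div_nonneg hf₀ (by linarith)
  obtain ⟨x, θ, hx, hx₀⟩ := hS.exists_isCutoffFlow hf N (R := B + 1) (by linarith) hT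
  have hgrowth := (hx.growthBound hS hs hslam hcs).mono hK (hnorm_trigPoly_le hf hx₀)
  refine ⟨fun t => trigPoly (x t), hx₀, fun t _ => inHs_trigPoly s _, fun t ht k hk => ?_, hgrowth⟩
  have hsmall : ‖x t‖ ≤ B + 1 := by
    linarith [norm_le_hnorm_trigPoly (by linarith : 0 ≤ s) (x t),
      hgrowth.hnorm_le hK hf₀ hfT ht ht.le]
  simpa only [hx.eq_one t hsmall, Complex.ofReal_one, one_mul] using hx.hasDerivAt t ht k hk

end Galerkin

/-! ### The limit of the Galerkin approximations -/

/-- The bound of `IsKernel.hnorm_sub_le` for the `Ḣ^{s-1}` distance of two solutions on `|t| < T` of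
the components of the equation at the frequencies `|k| ≤ N`, bounded by `B` in `Ḣ^s`. -/
noncomputable def comparisonError (lam s C T B : ℝ) (N : ℕ) : ℝ :=
  √((N + 1 : ℝ)⁻¹ * (2 * B) ^ 2 * Real.exp (separationRate lam s C B * T))

/-- A curve that satisfies the equation for `|t| < T`, with `Ḣ^s` norm bounded on each smaller
interval. -/
def IsLocalSol (S : ℤ → ℤ → ℤ → ℂ) (s T : ℝ) (u : ℝ → ℤ → ℂ) : Prop :=
  ∀ T' < T, ∃ B, BoundedSolOn S s Set.univ T' B u

/-- A sequence whose `n`-th term satisfies the `n`-th Galerkin truncation of the initial-value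
problem, with `Ḣ^s` norm eventually uniformly bounded on each interval smaller than `|t| < T`. -/
structure IsGalerkinSeq (S : ℤ → ℤ → ℤ → ℂ) (s T : ℝ) (f : ℤ → ℂ) (u : ℕ → ℝ → ℤ → ℂ) :
    Prop where
  apply_zero : ∀ n, ∀ k ∈ window n, u n 0 k = f k
  bounded : ∀ T' < T, ∃ B, ∀ᶠ n in atTop, BoundedSolOn S s (window n) T' B (u n)

section Limit

variable {lam s ρ b C Cs T T' B B' : ℝ} {S : ℤ → ℤ → ℤ → ℂ} {f y : ℤ → ℂ}

lemma BoundedSolOn.mono {F F' : Set ℤ} {u : ℝ → ℤ → ℂ} (h : BoundedSolOn S s F T B u)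
    (hF : F' ⊆ F) (hT : T' ≤ T) (hB : B ≤ B') : BoundedSolOn S s F' T' B' u where
  inHs t ht := h.inHs t (ht.trans_le hT)
  hnorm_le t ht := (h.hnorm_le t (ht.trans_le hT)).trans hB
  hasDerivAt t ht k hk := h.hasDerivAt t (ht.trans_le hT) k (hF hk)

lemma window_mono {M N : ℕ} (h : M ≤ N) : window M ⊆ window N := fun k hk => by
  rw [mem_window] at hk ⊢
  exact hk.trans (by exact_mod_cast h)

lemma eventually_mem_window (k : ℤ) : ∀ᶠ N in atTop, k ∈ window N :=
  eventually_atTop.2 ⟨k.natAbs, fun N hN =>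
    mem_window.2 (k.abs_eq_natAbs ▸ by exact_mod_cast hN)⟩

lemma tendsto_comparisonError (lam s C T B : ℝ) :
    Tendsto (comparisonError lam s C T B) atTop (nhds 0) := by
  have hinv : Tendsto (fun N : ℕ => (N + 1 : ℝ)⁻¹) atTop (nhds 0) := by
    simpa only [one_div] using tendsto_one_div_add_atTop_nhds_zero_nat (𝕜 := ℝ)
  have hsqrt := ((hinv.mul_const ((2 * B) ^ 2)).mul_const
    (Real.exp (separationRate lam s C B * T))).sqrt
  rwa [zero_mul, zero_mul, Real.sqrt_zero] at hsqrt

lemma IsKernel.hnorm_sub_le (hS : IsKernel lam C S) (hs : 1 / 2 < s) (hslam : 1 / 2 < s + lam - 1)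
    {N : ℕ} {u v : ℝ → ℤ → ℂ} (hB : 0 < B) (hu : BoundedSolOn S s (window N) T B u)
    (hv : BoundedSolOn S s (window N) T B v) (h0 : ∀ k ∈ window N, u 0 k = v 0 k) {t : ℝ}
    (ht : |t| < T) : hnorm (s - 1) (u t - v t) ≤ comparisonError lam s C T B N := by
  have hrate : 0 ≤ separationRate lam s C B := by
    have := hS.C_nonneg
    have := hS.algConst_nonneg s
    have := commConst_nonneg hs
    have := Mconst_nonneg (s + lam - 1)
    unfold separationRate
    positivity
  refine Real.le_sqrt_of_sq_le ((hS.hnorm_sub_sq_le hs hslam hB hu hv h0 ht).trans ?_)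
  gcongr

lemma InHs.of_tendsto {ι : Type*} {l : Filter ι} [l.NeBot] {x : ι → ℤ → ℂ}
    (hx : ∀ᶠ i in l, InHs ρ (x i)) (hb : ∀ᶠ i in l, hnorm ρ (x i) ≤ b)
    (hlim : ∀ k, Tendsto (fun i => x i k) l (nhds (y k))) : InHs ρ y ∧ hnorm ρ y ≤ b := by
  have hsum (F : Finset ℤ) : ∑ k ∈ F, wcoeff ρ y k ^ 2 ≤ b ^ 2 := by
    refine le_of_tendsto (tendsto_finsetSum _ fun k _ => ((hlim k).norm.const_mul _).pow 2) ?_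
    filter_upwards [hx, hb] with i hxi hbi
    refine (hxi.hasSumLE_wcoeff_sq.summable.sum_le_tsum F fun _ _ => sq_nonneg _).trans ?_
    rw [← hnorm_sq]
    exact pow_le_pow_left₀ (hnorm_nonneg _ _) hbi 2
  have hsummable := summable_of_sum_le (fun _ => sq_nonneg _) hsum
  obtain ⟨i, hbi⟩ := hb.exists
  refine ⟨inHs_iff_summable_wcoeff_sq.2 ⟨?_, fun k => ?_, hsummable⟩, hnorm_le_of_hasSumLE
    ⟨hsummable, hsummable.tsum_le_of_sum_le hsum⟩ ((hnorm_nonneg _ _).trans hbi)⟩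
  · exact tendsto_nhds_unique_of_eventuallyEq (hlim 0) tendsto_const_nhds (hx.mono fun i hi => hi.1)
  · exact tendsto_nhds_unique_of_eventuallyEq (hlim (-k))
      ((Complex.continuous_conj.tendsto _).comp (hlim k)) (hx.mono fun i hi => hi.2.1 k)

namespace IsGalerkinSeq

variable {u : ℕ → ℝ → ℤ → ℂ} {U : ℝ → ℤ → ℂ}

lemma exists_hnorm_sub_le (hu : IsGalerkinSeq S s T f u) (hS : IsKernel lam C S) (hs : 1 / 2 < s)
    (hslam : 1 / 2 < s + lam - 1) (hT' : T' < T) : ∃ B, ∀ᶠ m in atTop,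
      BoundedSolOn S s (window m) T' B (u m) ∧ ∀ n ≥ m, ∀ t, |t| < T' →
        InHs (s - 1) (u m t - u n t) ∧
          hnorm (s - 1) (u m t - u n t) ≤ comparisonError lam s C T' B m := by
  obtain ⟨B, hB⟩ := hu.bounded T' hT'
  obtain ⟨M, hM⟩ := eventually_atTop.1 hB
  refine ⟨max B 1, eventually_atTop.2 ⟨M, fun m hm => ?_⟩⟩
  have hsol (n : ℕ) (hn : m ≤ n) : BoundedSolOn S s (window m) T' (max B 1) (u n) :=
    (hM n (hm.trans hn)).mono (by exact_mod_cast window_mono hn) le_rfl (le_max_left _ _)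
  have h0 (n : ℕ) (hn : m ≤ n) (k : ℤ) (hk : k ∈ window m) : u m 0 k = u n 0 k :=
    (hu.apply_zero m k hk).trans (hu.apply_zero n k (window_mono hn hk)).symm
  exact ⟨hsol m le_rfl, fun n hn t ht =>
    ⟨(((hsol m le_rfl).inHs t ht).sub ((hsol n hn).inHs t ht)).mono (by linarith),
      hS.hnorm_sub_le hs hslam (by positivity) (hsol m le_rfl) (hsol n hn) (h0 n hn) ht⟩⟩

lemma cauchySeq (hu : IsGalerkinSeq S s T f u) (hS : IsKernel lam C S) (hs : 1 / 2 < s)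
    (hslam : 1 / 2 < s + lam - 1) {t : ℝ} (ht : |t| < T) (k : ℤ) :
    CauchySeq fun n => u n t k := by
  obtain ⟨T', htT', hT'⟩ := exists_between ht
  obtain ⟨B, hB⟩ := hu.exists_hnorm_sub_le hS hs hslam hT'
  have herr := (tendsto_comparisonError lam s C T' B).const_mul (|(k : ℝ)| ^ (-(s - 1)))
  rw [mul_zero] at herr
  refine Metric.cauchySeq_iff'.2 fun ε hε => ?_
  obtain ⟨m, hm, hmε⟩ := (hB.and (herr.eventually_lt_const hε)).exists
  refine ⟨m, fun n hn => ?_⟩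
  obtain ⟨hdiff, hle⟩ := hm.2 n hn t htT'
  rw [dist_comm, dist_eq_norm]
  exact ((hdiff.norm_apply_le k).trans
    (mul_le_mul_of_nonneg_left hle (by positivity))).trans_lt hmε

lemma tendstoUniformlyOn_vectorField (hu : IsGalerkinSeq S s T f u) (hS : IsKernel lam C S)
    (hs : 1 / 2 < s) (hslam : 1 / 2 < s + lam - 1)
    (hlim : ∀ t, |t| < T → ∀ k, Tendsto (fun n => u n t k) atTop (nhds (U t k))) (hT' : T' < T)
    (k : ℤ) : TendstoUniformlyOn (fun n t => vectorField S (u n t) k)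
      (fun t => vectorField S (U t) k) atTop (Set.Ioo (-T') T') := by
  obtain ⟨B, hB⟩ := hu.exists_hnorm_sub_le hS hs hslam hT'
  have hU (t : ℝ) (ht : |t| < T') : InHs s (U t) ∧ hnorm s (U t) ≤ B :=
    InHs.of_tendsto (hB.mono fun n hn => hn.1.inHs t ht) (hB.mono fun n hn => hn.1.hnorm_le t ht)
      (hlim t (ht.trans hT'))
  have herr := ((((tendsto_comparisonError lam s C T' B).mul_const (2 * B)).const_mul
    (C * (1 + |(k : ℝ)|))).const_mul |(k : ℝ)|)
  simp only [zero_mul, mul_zero] at herr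
  refine Metric.tendstoUniformlyOn_iff.2 fun ε hε => ?_
  filter_upwards [hB, herr.eventually_lt_const hε] with m hm hmε t ht
  replace ht := abs_lt.2 ht
  have hum := hm.1.inHs t ht
  have hdiff : hnorm (s - 1) (u m t - U t) ≤ comparisonError lam s C T' B m :=
    (InHs.of_tendsto (eventually_atTop.2 ⟨m, fun n hn => (hm.2 n hn t ht).1⟩)
      (eventually_atTop.2 ⟨m, fun n hn => (hm.2 n hn t ht).2⟩)
      fun k => (hlim t (ht.trans hT') k).const_sub (u m t k)).2
  have hsum : hnorm s (u m t + U t) ≤ 2 * B := by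
    linarith [hum.hnorm_add_le (hU t ht).1, hm.1.hnorm_le t ht, (hU t ht).2]
  have := hS.C_nonneg
  rw [dist_comm, dist_eq_norm]
  refine ((hS.norm_vectorField_sub_apply_le hs hum (hU t ht).1 k).trans ?_).trans_lt hmε
  gcongr
  exacts [hnorm_nonneg _ _, (hnorm_nonneg _ _).trans hdiff]

lemma isLocalSol (hu : IsGalerkinSeq S s T f u) (hS : IsKernel lam C S) (hs : 1 / 2 < s)
    (hslam : 1 / 2 < s + lam - 1)
    (hlim : ∀ t, |t| < T → ∀ k, Tendsto (fun n => u n t k) atTop (nhds (U t k))) :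
    IsLocalSol S s T U := by
  intro T' hT'
  obtain ⟨B, hB⟩ := hu.bounded T' hT'
  have hU (t : ℝ) (ht : |t| < T') : InHs s (U t) ∧ hnorm s (U t) ≤ B :=
    InHs.of_tendsto (hB.mono fun n hn => hn.inHs t ht) (hB.mono fun n hn => hn.hnorm_le t ht)
      (hlim t (ht.trans hT'))
  refine ⟨B, fun t ht => (hU t ht).1, fun t ht => (hU t ht).2, fun t ht k _ => ?_⟩
  refine hasDerivAt_of_tendstoUniformlyOn isOpen_Ioo
    (hu.tendstoUniformlyOn_vectorField hS hs hslam hlim hT' k) ?_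
    (fun τ hτ => hlim τ ((abs_lt.2 hτ).trans hT') k) (abs_lt.1 ht)
  filter_upwards [hB, eventually_mem_window k] with n hn hkn τ hτ
  exact hn.hasDerivAt τ (abs_lt.2 hτ) k hkn

end IsGalerkinSeq

lemma mul_lt_one_of_lt {c : ℝ} (hc : 0 ≤ c) (h : c * T ≤ 1) (hT' : T' < T) : c * T' < 1 := by
  rcases hc.eq_or_lt with rfl | hc
  · simp only [zero_mul, zero_lt_one]
  · exact (mul_lt_mul_of_pos_left hT' hc).trans_le h

lemma IsKernel.exists_isGalerkinSeq (hS : IsKernel lam C S) (hs : 1 / 2 < s)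
    (hslam : 1 / 2 < s + lam - 1) (hcs : CubicSymbolBound lam s Cs) (hf : InHs s f) (hT : 0 < T)
    (hfT : energyConst lam s C Cs * hnorm s f * T ≤ 1) : ∃ u, IsGalerkinSeq S s T f u ∧
      ∀ T' < T, ∀ᶠ n in atTop, GrowthBound s (energyConst lam s C Cs) (hnorm s f) T' (u n) := by
  have hK := hS.energyConst_nonneg hcs (by linarith)
  have hKf := mul_nonneg hK (hnorm_nonneg s f)
  obtain ⟨τ, -, hτ, hτlim⟩ := exists_seq_strictMono_tendsto' hT
  choose u hu₀ huHs hu hgrowth using fun n => hS.exists_galerkin hs hslam hcs hf (hτ n).1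
    (mul_lt_one_of_lt hKf hfT (hτ n).2) n
  refine ⟨u, ⟨hu₀, fun T' hT' =>
    ⟨hnorm s f / (1 - energyConst lam s C Cs * hnorm s f * T'), ?_⟩⟩, fun T' hT' => ?_⟩ <;>
    filter_upwards [hτlim.eventually_const_lt hT'] with n hn
  · exact ⟨fun t ht => huHs n t (ht.trans hn), fun t ht => (hgrowth n).hnorm_le hK
      (hnorm_nonneg s f) (mul_lt_one_of_lt hKf hfT hT') (ht.trans hn) ht.le,
      fun t ht => hu n t (ht.trans hn)⟩
  · exact fun t ht => hgrowth n t (ht.trans hn)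

theorem IsKernel.exists_isLocalSol (hS : IsKernel lam C S) (hs : 1 / 2 < s)
    (hslam : 1 / 2 < s + lam - 1) (hcs : CubicSymbolBound lam s Cs) (hf : InHs s f)
    (hfT : energyConst lam s C Cs * hnorm s f * T ≤ 1) :
    ∃ u, IsLocalSol S s T u ∧ u 0 = f ∧ GrowthBound s (energyConst lam s C Cs) (hnorm s f) T u := by
  rcases le_or_gt T 0 with hT | hT
  · have hempty (t : ℝ) : ¬|t| < T := (hT.trans (abs_nonneg t)).not_gt
    exact ⟨fun _ => f, fun T' hT' => ⟨0, fun t ht => absurd (ht.trans hT') (hempty t),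
      fun t ht => absurd (ht.trans hT') (hempty t),
      fun t ht => absurd (ht.trans hT') (hempty t)⟩, rfl, fun t ht => absurd ht (hempty t)⟩
  have hK := hS.energyConst_nonneg hcs (by linarith)
  have hf₀ := hnorm_nonneg s f
  obtain ⟨u, hu, hgrowth⟩ := hS.exists_isGalerkinSeq hs hslam hcs hf hT hfT
  have hlim (t : ℝ) (ht : |t| < T) (k : ℤ) := (hu.cauchySeq hS hs hslam ht k).tendsto_limUnder
  refine ⟨fun t k => limUnder atTop fun n => u n t k, hu.isLocalSol hS hs hslam hlim, ?_, ?_⟩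
  · funext k
    refine Tendsto.limUnder_eq (tendsto_const_nhds.congr' ?_)
    filter_upwards [eventually_mem_window k] with n hn using (hu.apply_zero n k hn).symm
  · intro t ht
    obtain ⟨T', htT', hT'⟩ := exists_between ht
    obtain ⟨B, hB⟩ := hu.bounded T' hT'
    have ht₁ := mul_lt_one_of_lt (mul_nonneg hK hf₀) hfT ht
    refine (le_div_iff₀ (sub_pos.2 ht₁)).1 (InHs.of_tendsto (l := atTop) (x := fun n => u n t)
      (hB.mono fun n hn => hn.inHs t htT') ?_ (hlim t ht)).2
    exact (hgrowth T' hT').mono fun n hn => hn.hnorm_le hK hf₀ ht₁ htT' le_rfl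

end Limit

/-! ### Strong convergence and strong continuity -/

section StrongConvergence

variable {lam s ρ C : ℝ} {S : ℤ → ℤ → ℤ → ℂ} {w z y : ℤ → ℂ} {u : ℝ → ℤ → ℂ} {I : Set ℝ}

lemma wcoeff_sub_sq_le (ρ : ℝ) (w z : ℤ → ℂ) (k : ℤ) :
    wcoeff ρ (w - z) k ^ 2 ≤ 2 * wcoeff ρ w k ^ 2 + 2 * wcoeff ρ z k ^ 2 := by
  have h := parallelogram_law_with_norm ℝ (w k) (z k)
  simp only [wcoeff, mul_pow, Pi.sub_apply]
  nlinarith [sq_nonneg ‖w k + z k‖, sq_nonneg (|(k : ℝ)| ^ ρ)]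

lemma InHs.hnorm_sub_sq_add_sum_le (hw : InHs ρ w) (hz : InHs ρ z) (F : Finset ℤ) :
    hnorm ρ (w - z) ^ 2 + ∑ k ∈ F, (2 * wcoeff ρ w k ^ 2 + 2 * wcoeff ρ z k ^ 2 -
      wcoeff ρ (w - z) k ^ 2) ≤ 2 * hnorm ρ w ^ 2 + 2 * hnorm ρ z ^ 2 := by
  have hw₂ := hw.hasSumLE_wcoeff_sq.summable.mul_left 2
  have hz₂ := hz.hasSumLE_wcoeff_sq.summable.mul_left 2
  have hsub := (hw.sub hz).hasSumLE_wcoeff_sq.summable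
  have hle := ((hw₂.add hz₂).sub hsub).sum_le_tsum F
    fun k _ => sub_nonneg.2 (wcoeff_sub_sq_le ρ w z k)
  rw [(hw₂.add hz₂).tsum_sub hsub, hw₂.tsum_add hz₂, tsum_mul_left, tsum_mul_left] at hle
  simp only [hnorm_sq]
  linarith

/-- Weak convergence without loss of norm is strong convergence. -/
lemma tendsto_hnorm_sub_of_tendsto_apply {ι : Type*} {l : Filter ι} {x : ι → ℤ → ℂ} {b : ι → ℝ}
    (hy : InHs ρ y) (hx : ∀ᶠ i in l, InHs ρ (x i))
    (hlim : ∀ k, Tendsto (fun i => x i k) l (nhds (y k)))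
    (hb : ∀ᶠ i in l, hnorm ρ (x i) ≤ b i) (hblim : Tendsto b l (nhds (hnorm ρ y))) :
    Tendsto (fun i => hnorm ρ (x i - y)) l (nhds 0) := by
  suffices hsq : Tendsto (fun i => hnorm ρ (x i - y) ^ 2) l (nhds 0) by
    simpa only [Real.sqrt_sq (hnorm_nonneg _ _), Real.sqrt_zero] using hsq.sqrt
  refine tendsto_order.2 ⟨fun a ha => .of_forall fun i => ha.trans_le (sq_nonneg _), fun ε hε => ?_⟩
  have hsum := hy.hasSumLE_wcoeff_sq.summable.hasSum
  rw [← hnorm_sq] at hsum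
  obtain ⟨F, hF⟩ := (hsum.eventually_const_lt
    (by linarith : hnorm ρ y ^ 2 - ε / 4 < hnorm ρ y ^ 2)).exists
  have hpart : Tendsto (fun i => ∑ k ∈ F, (2 * wcoeff ρ (x i) k ^ 2 + 2 * wcoeff ρ y k ^ 2 -
      wcoeff ρ (x i - y) k ^ 2)) l (nhds (∑ k ∈ F, 4 * wcoeff ρ y k ^ 2)) := by
    refine tendsto_finsetSum _ fun k _ => ?_
    have hxk : Tendsto (fun i => wcoeff ρ (x i) k ^ 2) l (nhds (wcoeff ρ y k ^ 2)) :=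
      ((hlim k).norm.const_mul _).pow 2
    have hdiff : Tendsto (fun i => wcoeff ρ (x i - y) k ^ 2) l (nhds 0) := by
      simpa [wcoeff] using ((((hlim k).sub_const (y k)).norm).const_mul (|(k : ℝ)| ^ ρ)).pow 2
    convert ((hxk.const_mul 2).add_const (2 * wcoeff ρ y k ^ 2)).sub hdiff using 2
    ring
  have hupper := (((hblim.pow 2).const_mul 2).add_const (2 * hnorm ρ y ^ 2)).sub hpart
  rw [← Finset.mul_sum] at hupper
  filter_upwards [hx, hb, hupper.eventually_lt_const (u := ε) (by linarith)] with i hxi hbi hi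
  linarith [hxi.hnorm_sub_sq_add_sum_le hy F, pow_le_pow_left₀ (hnorm_nonneg ρ (x i)) hbi 2]

lemma InHs.abs_hnorm_sub_hnorm_le (hw : InHs ρ w) (hz : InHs ρ z) :
    |hnorm ρ w - hnorm ρ z| ≤ hnorm ρ (w - z) := by
  have hwz := (hw.sub hz).hnorm_add_le hz
  have hzw := hw.hnorm_sub_le (hw.sub hz)
  rw [sub_add_cancel] at hwz
  rw [sub_sub_cancel] at hzw
  exact abs_le.2 ⟨by linarith, by linarith⟩

lemma HsContOn.continuousOn_hnorm (hu : ∀ t ∈ I, InHs ρ (u t)) (h : HsContOn ρ u I) :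
    ContinuousOn (fun t => hnorm ρ (u t)) I := fun t₀ ht₀ =>
  tendsto_iff_dist_tendsto_zero.2 <| squeeze_zero' (.of_forall fun _ => dist_nonneg)
    (eventually_mem_nhdsWithin.mono fun t ht => (hu t ht).abs_hnorm_sub_hnorm_le (hu t₀ ht₀))
    (h t₀ ht₀)

lemma IsKernel.hsContOn_vectorField (hS : IsKernel lam C S) (hs : 1 / 2 < s)
    (hu : ∀ t ∈ I, InHs s (u t)) (h : HsContOn s u I) :
    HsContOn (s - 1) (fun t => vectorField S (u t)) I := by
  intro t₀ ht₀
  have hbound := ((h t₀ ht₀).mul ((h.continuousOn_hnorm hu t₀ ht₀).tendsto.add_const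
    (hnorm s (u t₀)))).const_mul (algConst s C)
  rw [zero_mul, mul_zero] at hbound
  refine squeeze_zero' (.of_forall fun _ => hnorm_nonneg _ _) ?_ hbound
  filter_upwards [eventually_mem_nhdsWithin] with t ht
  refine (hS.hnorm_vectorField_sub_le hs (hu t ht) (hu t₀ ht₀)).trans ?_
  exact mul_le_mul_of_nonneg_left (mul_le_mul_of_nonneg_left
    ((hu t ht).hnorm_add_le (hu t₀ ht₀)) (hnorm_nonneg _ _)) (hS.algConst_nonneg s)

end StrongConvergence

namespace IsLocalSol

variable {lam s C Cs T t t₀ : ℝ} {S : ℤ → ℤ → ℤ → ℂ} {u v : ℝ → ℤ → ℂ}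

lemma inHs (hu : IsLocalSol S s T u) (ht : |t| < T) : InHs s (u t) := by
  obtain ⟨T', htT', hT'⟩ := exists_between ht
  obtain ⟨B, hB⟩ := hu T' hT'
  exact hB.inHs t htT'

lemma hasDerivAt (hu : IsLocalSol S s T u) (ht : |t| < T) (k : ℤ) :
    HasDerivAt (fun τ => u τ k) (vectorField S (u t) k) t := by
  obtain ⟨T', htT', hT'⟩ := exists_between ht
  obtain ⟨B, hB⟩ := hu T' hT'
  exact hB.hasDerivAt t htT' k (Set.mem_univ k)

lemma comp_const_add (hu : IsLocalSol S s T u) (hT : |t₀| + t ≤ T) :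
    IsLocalSol S s t fun τ => u (t₀ + τ) := by
  intro T' hT'
  obtain ⟨B, hB⟩ := hu (|t₀| + T') (by linarith)
  have hshift (τ : ℝ) (hτ : |τ| < T') : |t₀ + τ| < |t₀| + T' :=
    (abs_add_le t₀ τ).trans_lt (by linarith)
  exact ⟨B, fun τ hτ => hB.inHs _ (hshift τ hτ), fun τ hτ => hB.hnorm_le _ (hshift τ hτ),
    fun τ hτ k hk => (hB.hasDerivAt _ (hshift τ hτ) k hk).comp_const_add t₀ τ⟩

theorem apply_eq (hu : IsLocalSol S s T u) (hv : IsLocalSol S s T v) (hS : IsKernel lam C S)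
    (hs : 1 / 2 < s) (hslam : 1 / 2 < s + lam - 1) (h0 : u 0 = v 0) (ht : |t| < T) :
    u t = v t := by
  obtain ⟨T', htT', hT'⟩ := exists_between ht
  obtain ⟨B₁, hu'⟩ := hu T' hT'
  obtain ⟨B₂, hv'⟩ := hv T' hT'
  set B := max (max B₁ B₂) 1
  have hle : hnorm (s - 1) (u t - v t) ≤ 0 :=
    ge_of_tendsto' (tendsto_comparisonError lam s C T' B) fun N => hS.hnorm_sub_le hs hslam
      (by positivity)
      (hu'.mono (Set.subset_univ _) le_rfl ((le_max_left _ _).trans (le_max_left _ _)))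
      (hv'.mono (Set.subset_univ _) le_rfl ((le_max_right _ _).trans (le_max_left _ _)))
      (fun k _ => congrFun h0 k) htT'
  have hdiff : InHs (s - 1) (u t - v t) := ((hu.inHs ht).sub (hv.inHs ht)).mono (by linarith)
  funext k
  refine sub_eq_zero.1 (norm_le_zero_iff.1 ((hdiff.norm_apply_le k).trans ?_))
  exact mul_nonpos_of_nonneg_of_nonpos (by positivity) hle

theorem growthBound (hu : IsLocalSol S s T u) (hS : IsKernel lam C S) (hs : 1 / 2 < s)
    (hslam : 1 / 2 < s + lam - 1) (hcs : CubicSymbolBound lam s Cs) (h0 : InHs s (u 0))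
    (hT : energyConst lam s C Cs * hnorm s (u 0) * T ≤ 1) :
    GrowthBound s (energyConst lam s C Cs) (hnorm s (u 0)) T u := by
  obtain ⟨v, hv, hv₀, hgrowth⟩ := hS.exists_isLocalSol hs hslam hcs h0 hT
  intro t ht
  rw [hu.apply_eq hv hS hs hslam hv₀.symm ht]
  exact hgrowth t ht

/-- Restarting the equation at `t₀` bounds the norm near `t₀` by a function that is continuous at
`t₀`, so it cannot jump upwards. -/
lemma tendsto_hnorm_sub (hu : IsLocalSol S s T u) (hS : IsKernel lam C S) (hs : 1 / 2 < s)
    (hslam : 1 / 2 < s + lam - 1) (hcs : CubicSymbolBound lam s Cs) (ht₀ : |t₀| < T) :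
    Tendsto (fun t => hnorm s (u t - u t₀)) (nhds t₀) (nhds 0) := by
  have hu₀ := hu.inHs ht₀
  set c := energyConst lam s C Cs * hnorm s (u t₀) with hc_def
  have hc : 0 ≤ c := mul_nonneg (hS.energyConst_nonneg hcs (by linarith)) (hnorm_nonneg _ _)
  set T₁ := min (T - |t₀|) (1 / (c + 1))
  have hT₁ : 0 < T₁ := lt_min (by linarith) (by positivity)
  have hcT₁ : c * T₁ ≤ 1 := calc
    c * T₁ ≤ c * (1 / (c + 1)) := mul_le_mul_of_nonneg_left (min_le_right _ _) hc
    _ ≤ 1 := by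
      rw [mul_one_div]
      exact div_le_one_of_le₀ (by linarith) (by linarith)
  have hgrowth := (hu.comp_const_add (t₀ := t₀) (t := T₁)
    (by linarith [min_le_left (T - |t₀|) (1 / (c + 1))])).growthBound hS hs hslam hcs
    (by simpa only [add_zero] using hu₀) (by simpa only [add_zero] using hcT₁)
  simp only [GrowthBound, add_zero, ← hc_def] at hgrowth
  refine tendsto_hnorm_sub_of_tendsto_apply (b := fun t => hnorm s (u t₀) / (1 - c * |t - t₀|))
    hu₀ ?_ (fun k => (hu.hasDerivAt ht₀ k).continuousAt) ?_ ?_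
  · exact (continuous_abs.continuousAt.eventually_lt_const ht₀).mono fun t ht => hu.inHs ht
  · have hnear : ∀ᶠ t in nhds t₀, |t - t₀| < T₁ := Metric.ball_mem_nhds t₀ hT₁
    filter_upwards [hnear] with t ht
    rw [le_div_iff₀ (sub_pos.2 (mul_lt_one_of_lt hc hcT₁ ht))]
    simpa only [add_sub_cancel] using hgrowth (t - t₀) ht
  · have hcont : ContinuousAt (fun t => hnorm s (u t₀) / (1 - c * |t - t₀|)) t₀ :=
      ContinuousAt.div (by fun_prop) (by fun_prop) (by simp)
    simpa [ContinuousAt] using hcont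

theorem isSolution (hu : IsLocalSol S s T u) (hS : IsKernel lam C S) (hs : 1 / 2 < s)
    (hslam : 1 / 2 < s + lam - 1) (hcs : CubicSymbolBound lam s Cs) :
    IsSolution S s (Set.Ioo (-T) T) u := by
  have huHs (t : ℝ) (ht : t ∈ Set.Ioo (-T) T) : InHs s (u t) := hu.inHs (abs_lt.2 ht)
  have hcont : HsContOn s u (Set.Ioo (-T) T) := fun t₀ ht₀ =>
    (hu.tendsto_hnorm_sub hS hs hslam hcs (abs_lt.2 ht₀)).mono_left nhdsWithin_le_nhds
  exact ⟨huHs, hcont, fun t ht => hu.hasDerivAt (abs_lt.2 ht),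
    fun t ht => hS.inHs_vectorField hs (huHs t ht), hS.hsContOn_vectorField hs huHs hcont⟩

end IsLocalSol

lemma IsSolution.isLocalSol {s T : ℝ} {S : ℤ → ℤ → ℤ → ℂ} {u : ℝ → ℤ → ℂ}
    (hu : IsSolution S s (Set.Ioo (-T) T) u) : IsLocalSol S s T u := by
  obtain ⟨huHs, hcont, hderiv, -, -⟩ := hu
  intro T' hT'
  obtain ⟨B, hB⟩ := isCompact_Icc.exists_bound_of_continuousOn
    ((hcont.continuousOn_hnorm huHs).mono (Set.Icc_subset_Ioo (neg_lt_neg hT') hT'))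
  exact ⟨B, fun t ht => huHs t (abs_lt.1 (ht.trans hT')),
    fun t ht => (le_abs_self _).trans (hB t (abs_le.1 ht.le)),
    fun t ht k _ => hderiv t (abs_lt.1 (ht.trans hT')) k⟩

theorem short_time_existence_negative_degree_general {lam s C Cs T : ℝ} {S : ℤ → ℤ → ℤ → ℂ}
    {f : ℤ → ℂ} (hS : IsKernel lam C S) (hs : max (3 / 2 - lam) (1 / 2) < s)
    (hcs : CubicSymbolBound lam s Cs) (hf : InHs s f)
    (hT : energyConst lam s C Cs * hnorm s f * T ≤ 1) :
    ∃ u : ℝ → ℤ → ℂ, (IsSolution S s (Set.Ioo (-T) T) u ∧ u 0 = f) ∧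
      ∀ v : ℝ → ℤ → ℂ, IsSolution S s (Set.Ioo (-T) T) v → v 0 = f →
        ∀ t ∈ Set.Ioo (-T) T, v t = u t := by
  obtain ⟨hs_lam, hs_half⟩ := max_lt_iff.1 hs
  have hslam : 1 / 2 < s + lam - 1 := by linarith
  obtain ⟨u, hu, hu₀, -⟩ := hS.exists_isLocalSol hs_half hslam hcs hf hT
  exact ⟨u, ⟨hu.isSolution hS hs_half hslam hcs, hu₀⟩, fun v hv hv₀ t ht =>
    hv.isLocalSol.apply_eq hu hS hs_half hslam (hv₀.trans hu₀.symm) (abs_lt.2 ht)⟩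

/-- Short-time existence and uniqueness for kernels of negative degree `−λ < 0`. -/
theorem short_time_existence_negative_degree
    (lam : ℝ) (hlam : 0 < lam) (S : ℤ → ℤ → ℤ → ℂ)
    (hS0 : ∀ k m n : ℤ, k * m * n = 0 → S k m n = 0)
    (hSreal : ∀ k m n : ℤ, S k m n = starRingEnd ℂ (S (-k) (-m) (-n)))
    (hSsym : ∀ k m n : ℤ, S k m n = S k n m)
    (hScyc : ∀ k m n : ℤ, S k m n = S m n k)
    (hShom : ∀ η : ℕ, 0 < η → ∀ k m n : ℤ,
      S (η * k) (η * m) (η * n) = ((((η : ℝ) ^ (-lam) : ℝ)) : ℂ) * S k m n)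
    (C : ℝ) (hC : 0 < C)
    (hSbound : ∀ k m n : ℤ, k * m * n ≠ 0 → ‖S k m n‖ ≤
      C / min (|(k : ℝ)| ^ lam) (min (|(m : ℝ)| ^ lam) (|(n : ℝ)| ^ lam)))
    (s : ℝ) (hs : max (3 / 2 - lam) (1 / 2) < s)
    (Cslam : ℝ)
    (hCslam : ∀ k m n : ℝ, k ≠ 0 → m ≠ 0 → n ≠ 0 → k + m + n = 0 →
      |k * |k| ^ (2 * s) + m * |m| ^ (2 * s) + n * |n| ^ (2 * s)| /
          min (|k| ^ lam) (min (|m| ^ lam) (|n| ^ lam)) ≤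
        Cslam * (|k| ^ s * |m| ^ s * |n| ^ (1 - lam) + |n| ^ s * |k| ^ s * |m| ^ (1 - lam) +
          |m| ^ s * |n| ^ s * |k| ^ (1 - lam)))
    (Kslam : ℝ) (hKslam : Kslam = C * Cslam * Mconst (s + lam - 1))
    (f : ℤ → ℂ) (hf : InHs s f) :
    ∃ u : ℝ → ℤ → ℂ,
      (IsSolution S s (Set.Ioo (-(1 / (Kslam * hnorm s f))) (1 / (Kslam * hnorm s f))) u ∧
        u 0 = f) ∧
      ∀ v : ℝ → ℤ → ℂ,
        IsSolution S s (Set.Ioo (-(1 / (Kslam * hnorm s f))) (1 / (Kslam * hnorm s f))) v →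
        v 0 = f →
        ∀ t ∈ Set.Ioo (-(1 / (Kslam * hnorm s f))) (1 / (Kslam * hnorm s f)), v t = u t := by
  subst hKslam
  have hS : IsKernel lam C S := ⟨hlam.le, hS0, hSreal, hSsym, hScyc, hSbound⟩
  refine short_time_existence_negative_degree_general hS hs hCslam hf ?_
  exact (mul_one_div _ _).trans_le (div_self_le_one _)
end

section
/- Let μ ≥ 0 and let S : ℤ³ → ℂ satisfy S(k,m,n) = 0 whenever kmn = 0 and the bound |S(k,m,n)| ≤ C·min{|k|^μ, |m|^μ, |n|^μ} for some constant C > 0 and all k,m,n ∈ ℤ. If s > μ + 1/2, then for all u, v ∈ Ḣ^s(𝕋) one has a(u,v) ∈ Ḣ^s(𝕋) with ‖a(u,v)‖_s ≤ 2 B_s C M_{s−μ} ‖u‖_s ‖v‖_s, where B_s = 1 if 0 < s ≤ 1 and B_s = 2^{s−1} if s ≥ 1, and M_σ = (2 Σ_{n=1}^∞ n^{−2σ})^{1/2}. In particular a : Ḣ^s × Ḣ^s → Ḣ^s is a bounded bilinear form, and it is symmetric, a(u,v) = a(v,u), whenever S(k,m,n) = S(k,n,m). -/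
open scoped BigOperators

/-- `B_s = 1` for `0 < s ≤ 1` and `B_s = 2^{s-1}` for `s ≥ 1`. -/
noncomputable def Bconst (s : ℝ) : ℝ := if s ≤ 1 then 1 else (2 : ℝ) ^ (s - 1)

/-!
Since `|k| ≤ |k - n| + |n|`, the weight `|k|^s` splits into `|k - n|^s + |n|^s` up to the factor
`B_s`. Bounding the kernel by the frequency that does not carry the weight `s` dominates
`|D|^s a(u, v)` pointwise by `B_s C (|D|^s u ⋆ |D|^μ v + |D|^μ u ⋆ |D|^s v)`, convolutions of
absolute values. Young's inequality `ℓ² ⋆ ℓ¹ ⊆ ℓ²` bounds each of the two terms, and the `ℓ¹` norm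
of `|D|^μ u` is at most `M_{s-μ} ‖u‖_s` by Cauchy-Schwarz against `|n|^{-(s-μ)}`, which is square
summable exactly when `s > μ + 1/2`.
-/

open MeasureTheory Measure
open scoped NNReal ENNReal

section CountingMeasure

variable {α ι E F G : Type*} [NormedAddCommGroup E] [NormedAddCommGroup F]

lemma eLpNorm_tsum_le [MeasurableSpace α] [Countable ι] {μ : Measure α}
    {f : ι → α → ℝ≥0∞} (hf : ∀ i, AEMeasurable (f i) μ) {p : ℝ≥0∞} (hp : 1 ≤ p) :
    eLpNorm (fun x ↦ ∑' i, f i x) p μ ≤ ∑' i, eLpNorm (f i) p μ := by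
  rcases eq_or_ne p ∞ with rfl | hp_top
  · simp only [eLpNorm_exponent_top]
    refine essSup_le_of_ae_le _ ?_
    filter_upwards [ae_all_iff.2 fun i ↦ ENNReal.ae_le_essSup (f i)] with x hx
    exact ENNReal.tsum_le_tsum hx
  have hp0 : p ≠ 0 := (zero_lt_one.trans_le hp).ne'
  have hp_pos : 0 < p.toReal := ENNReal.toReal_pos hp0 hp_top
  have rpow_tsum (x : α) : (∑' i, f i x) ^ p.toReal =
      ⨆ t : Finset ι, (∑ i ∈ t, f i x) ^ p.toReal := by
    rw [ENNReal.tsum_eq_iSup_sum]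
    exact (ENNReal.orderIsoRpow p.toReal hp_pos).map_iSup _
  have directed : Directed (· ≤ ·) fun (t : Finset ι) x ↦ (∑ i ∈ t, f i x) ^ p.toReal :=
    Monotone.directed_le fun s t hst x ↦ by dsimp only; gcongr
  calc eLpNorm (fun x ↦ ∑' i, f i x) p μ
      = ⨆ t : Finset ι, eLpNorm (∑ i ∈ t, f i) p μ := by
        simp only [eLpNorm_eq_lintegral_rpow_enorm_toReal hp0 hp_top, enorm_eq_self, rpow_tsum,
          Finset.sum_apply]
        rw [lintegral_iSup_directed (fun t ↦ (t.aemeasurable_fun_sum fun i _ ↦ hf i).pow_const _)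
          directed]
        exact (ENNReal.orderIsoRpow (1 / p.toReal) (by positivity)).map_iSup _
    _ ≤ ∑' i, eLpNorm (f i) p μ := iSup_le fun t ↦
        (eLpNorm_sum_le (fun i _ ↦ (hf i).aestronglyMeasurable) hp).trans (ENNReal.sum_le_tsum t)

lemma eLpNorm_count_convolution_le_mul_one [AddGroup G] [Countable G] [MeasurableSpace G]
    [DiscreteMeasurableSpace G] (f : G → E) (g : G → F) {p : ℝ≥0∞} (hp : 1 ≤ p) :
    eLpNorm (fun k ↦ ∑' n, ‖f (k - n)‖ₑ * ‖g n‖ₑ) p count ≤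
      eLpNorm f p count * eLpNorm g 1 count := by
  have translate_le (n : G) :
      eLpNorm (fun k ↦ ‖f (k - n)‖ₑ * ‖g n‖ₑ) p count ≤ eLpNorm f p count * ‖g n‖ₑ := by
    rw [← eLpNorm_comp_measurePreserving (g := f) .of_discrete
      (measurePreserving_sub_right count n), mul_comm]
    exact eLpNorm_le_nnreal_smul_eLpNorm_of_ae_le_mul' (c := ‖g n‖₊)
      (.of_forall fun k ↦ (mul_comm _ _).le) p
  calc eLpNorm (fun k ↦ ∑' n, ‖f (k - n)‖ₑ * ‖g n‖ₑ) p count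
      ≤ ∑' n, eLpNorm (fun k ↦ ‖f (k - n)‖ₑ * ‖g n‖ₑ) p count :=
        eLpNorm_tsum_le (fun _ ↦ .of_discrete) hp
    _ ≤ ∑' n, eLpNorm f p count * ‖g n‖ₑ := ENNReal.tsum_le_tsum translate_le
    _ = eLpNorm f p count * eLpNorm g 1 count := by
        rw [ENNReal.tsum_mul_left, eLpNorm_one_eq_lintegral_enorm, lintegral_count]

lemma eLpNorm_count_convolution_le_one_mul [AddCommGroup G] [Countable G] [MeasurableSpace G]
    [DiscreteMeasurableSpace G] (f : G → E) (g : G → F) {p : ℝ≥0∞} (hp : 1 ≤ p) :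
    eLpNorm (fun k ↦ ∑' n, ‖f (k - n)‖ₑ * ‖g n‖ₑ) p count ≤
      eLpNorm f 1 count * eLpNorm g p count := by
  have flip (k : G) : ∑' n, ‖f (k - n)‖ₑ * ‖g n‖ₑ = ∑' n, ‖g (k - n)‖ₑ * ‖f n‖ₑ := by
    rw [← (Equiv.subLeft k).tsum_eq]
    simp only [Equiv.subLeft_apply, sub_sub_cancel, mul_comm]
  simp only [flip]
  exact (eLpNorm_count_convolution_le_mul_one g f hp).trans_eq (mul_comm _ _)

lemma memLp_two_count_iff [MeasurableSpace ι] [DiscreteMeasurableSpace ι] [Countable ι]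
    {f : ι → E} :
    MemLp f 2 count ↔ Summable fun i ↦ ‖f i‖ ^ 2 := by
  rw [memLp_two_iff_integrable_sq_norm .of_discrete, integrable_count_iff]
  simp only [norm_pow, norm_norm]

lemma toReal_eLpNorm_two_count [MeasurableSpace ι] [MeasurableSingletonClass ι] (f : ι → E) :
    (eLpNorm f 2 count).toReal = √(∑' i, ‖f i‖ ^ 2) := by
  rw [eLpNorm_eq_lintegral_rpow_enorm_toReal two_ne_zero ENNReal.ofNat_ne_top, lintegral_count,
    ENNReal.toReal_ofNat, ← ENNReal.toReal_rpow, Real.sqrt_eq_rpow,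
    ENNReal.tsum_toReal_eq fun i ↦ by finiteness]
  simp only [ENNReal.rpow_ofNat, ENNReal.toReal_pow, toReal_enorm]

end CountingMeasure

lemma sq_abs_rpow (x r : ℝ) : (|x| ^ r) ^ 2 = |x| ^ (2 * r) := by
  rw [← Real.rpow_mul_natCast (abs_nonneg x), Nat.cast_ofNat, mul_comm]

lemma Bconst_nonneg (s : ℝ) : 0 ≤ Bconst s := by
  unfold Bconst
  split_ifs <;> positivity

lemma add_rpow_le_Bconst_mul {s a b : ℝ} (hs : 0 ≤ s) (ha : 0 ≤ a) (hb : 0 ≤ b) :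
    (a + b) ^ s ≤ Bconst s * (a ^ s + b ^ s) := by
  unfold Bconst
  split_ifs with h
  · simpa only [one_mul] using Real.rpow_add_le_add_rpow ha hb hs h
  · lift a to ℝ≥0 using ha
    lift b to ℝ≥0 using hb
    exact_mod_cast NNReal.rpow_add_le_mul_rpow_add_rpow a b (not_le.1 h).le

section SobolevSequences

/-- The Fourier multiplier `|D|^s` on coefficient sequences; `‖u‖_s` is the `ℓ²` norm of
`|D|^s u`. -/
noncomputable def absDeriv (s : ℝ) (u : ℤ → ℂ) (k : ℤ) : ℂ := (|(k : ℝ)| ^ s) • u k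

variable {s μ : ℝ} {u v : ℤ → ℂ}

lemma norm_absDeriv (s : ℝ) (u : ℤ → ℂ) (k : ℤ) :
    ‖absDeriv s u k‖ = |(k : ℝ)| ^ s * ‖u k‖ := by
  rw [absDeriv, norm_smul, Real.norm_of_nonneg (by positivity)]

lemma norm_absDeriv_sq (s : ℝ) (u : ℤ → ℂ) (k : ℤ) :
    ‖absDeriv s u k‖ ^ 2 = |(k : ℝ)| ^ (2 * s) * ‖u k‖ ^ 2 := by
  rw [norm_absDeriv, mul_pow, sq_abs_rpow]

lemma memLp_absDeriv_iff :
    MemLp (absDeriv s u) 2 count ↔ Summable fun k : ℤ ↦ |(k : ℝ)| ^ (2 * s) * ‖u k‖ ^ 2 := by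
  simp only [memLp_two_count_iff, norm_absDeriv_sq]

lemma hnorm_eq_toReal_eLpNorm (s : ℝ) (u : ℤ → ℂ) :
    hnorm s u = (eLpNorm (absDeriv s u) 2 count).toReal := by
  simp only [toReal_eLpNorm_two_count, norm_absDeriv_sq, hnorm, Real.sqrt_eq_rpow]

lemma memLp_abs_rpow_neg {σ : ℝ} (hσ : 1 / 2 < σ) :
    MemLp (fun n : ℤ ↦ |(n : ℝ)| ^ (-σ)) 2 count := by
  simp only [memLp_two_count_iff, Real.norm_eq_abs, sq_abs, sq_abs_rpow, mul_neg]
  exact Real.summable_abs_int_rpow (by linarith)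

lemma Mconst_eq_toReal_eLpNorm {σ : ℝ} (hσ : 1 / 2 < σ) :
    Mconst σ = (eLpNorm (fun n : ℤ ↦ |(n : ℝ)| ^ (-σ)) 2 count).toReal := by
  have summable : Summable fun n : ℤ ↦ |(n : ℝ)| ^ (-(2 * σ)) :=
    Real.summable_abs_int_rpow (by linarith)
  have even : Function.Even fun n : ℤ ↦ |(n : ℝ)| ^ (-(2 * σ)) := fun n ↦ by simp
  have pnat_sum : ∑' n : ℕ+, |((n : ℤ) : ℝ)| ^ (-(2 * σ)) =
      ∑' n : ℕ, ((n : ℝ) + 1) ^ (-(2 * σ)) := by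
    simpa [abs_of_nonneg, add_nonneg] using
      tsum_pnat_eq_tsum_succ (f := fun n : ℕ ↦ |(n : ℝ)| ^ (-(2 * σ)))
  simp only [toReal_eLpNorm_two_count, Real.norm_eq_abs, sq_abs, sq_abs_rpow, mul_neg]
  rw [tsum_int_eq_zero_add_two_mul_tsum_pnat even summable, pnat_sum, Int.cast_zero, abs_zero,
    Real.zero_rpow (by linarith), zero_add, nsmul_eq_mul, Nat.cast_ofNat, Mconst]

lemma absDeriv_eq_smul_absDeriv (hu : u 0 = 0) (s μ : ℝ) :
    absDeriv μ u = (fun n : ℤ ↦ |(n : ℝ)| ^ (-(s - μ))) • absDeriv s u := by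
  funext n
  rcases eq_or_ne n 0 with rfl | hn
  · simp [absDeriv, hu]
  · have : 0 < |(n : ℝ)| := by positivity
    simp only [Pi.smul_apply', absDeriv, smul_smul, ← Real.rpow_add this]
    ring_nf

lemma eLpNorm_one_absDeriv_le (hu : u 0 = 0) (s μ : ℝ) :
    eLpNorm (absDeriv μ u) 1 count ≤
      eLpNorm (fun n : ℤ ↦ |(n : ℝ)| ^ (-(s - μ))) 2 count * eLpNorm (absDeriv s u) 2 count := by
  rw [absDeriv_eq_smul_absDeriv hu s μ]
  exact eLpNorm_smul_le_mul_eLpNorm .of_discrete .of_discrete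

end SobolevSequences

section BilinearForm

variable {S : ℤ → ℤ → ℤ → ℂ} {μ s C : ℝ} {u v : ℤ → ℂ}

lemma aHat_zero (hS : ∀ m n, S 0 m n = 0) (u v : ℤ → ℂ) : aHat S u v 0 = 0 := by
  simp only [aHat, neg_zero, hS, zero_mul, tsum_zero]

lemma aHat_comm (hS : ∀ k m n, S k m n = S k n m) (u v : ℤ → ℂ) : aHat S u v = aHat S v u := by
  funext k
  rw [aHat, ← (Equiv.subLeft k).tsum_eq]
  refine tsum_congr fun n ↦ ?_
  simp only [Equiv.subLeft_apply, sub_sub_cancel]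
  rw [hS, mul_right_comm]

lemma abs_rpow_mul_norm_kernel_le (hC : 0 ≤ C)
    (hS : ∀ k m n : ℤ, ‖S k m n‖ ≤ C * min (|(m : ℝ)| ^ μ) (|(n : ℝ)| ^ μ)) (hs : 0 ≤ s)
    (k m n : ℤ) :
    |((m + n : ℤ) : ℝ)| ^ s * ‖S k m n‖ ≤
      Bconst s * C * (|(m : ℝ)| ^ s * |(n : ℝ)| ^ μ + |(m : ℝ)| ^ μ * |(n : ℝ)| ^ s) := by
  have weight_le : |((m + n : ℤ) : ℝ)| ^ s ≤ Bconst s * (|(m : ℝ)| ^ s + |(n : ℝ)| ^ s) := by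
    push_cast
    exact (Real.rpow_le_rpow (abs_nonneg _) (abs_add_le _ _) hs).trans
      (add_rpow_le_Bconst_mul hs (abs_nonneg _) (abs_nonneg _))
  have kernel_le_left : ‖S k m n‖ ≤ C * |(m : ℝ)| ^ μ :=
    (hS k m n).trans (by gcongr; exact min_le_left _ _)
  have kernel_le_right : ‖S k m n‖ ≤ C * |(n : ℝ)| ^ μ :=
    (hS k m n).trans (by gcongr; exact min_le_right _ _)
  have hB := Bconst_nonneg s
  calc |((m + n : ℤ) : ℝ)| ^ s * ‖S k m n‖
      ≤ Bconst s * (|(m : ℝ)| ^ s + |(n : ℝ)| ^ s) * ‖S k m n‖ := by gcongr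
    _ = Bconst s * (|(m : ℝ)| ^ s * ‖S k m n‖ + |(n : ℝ)| ^ s * ‖S k m n‖) := by ring
    _ ≤ Bconst s * (|(m : ℝ)| ^ s * (C * |(n : ℝ)| ^ μ)
          + |(n : ℝ)| ^ s * (C * |(m : ℝ)| ^ μ)) := by gcongr
    _ = Bconst s * C * (|(m : ℝ)| ^ s * |(n : ℝ)| ^ μ
          + |(m : ℝ)| ^ μ * |(n : ℝ)| ^ s) := by ring

lemma abs_rpow_mul_norm_aHat_term_le (hC : 0 ≤ C)
    (hS : ∀ k m n : ℤ, ‖S k m n‖ ≤ C * min (|(m : ℝ)| ^ μ) (|(n : ℝ)| ^ μ)) (hs : 0 ≤ s)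
    (u v : ℤ → ℂ) (k n : ℤ) :
    |(k : ℝ)| ^ s * ‖S (-k) (k - n) n * u (k - n) * v n‖ ≤
      Bconst s * C * (‖absDeriv s u (k - n)‖ * ‖absDeriv μ v n‖
        + ‖absDeriv μ u (k - n)‖ * ‖absDeriv s v n‖) := by
  have kernel_le := abs_rpow_mul_norm_kernel_le hC hS hs (-k) (k - n) n
  rw [sub_add_cancel] at kernel_le
  simp only [norm_mul, norm_absDeriv]
  linear_combination ‖u (k - n)‖ * ‖v n‖ * kernel_le

lemma enorm_absDeriv_aHat_le (hC : 0 ≤ C)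
    (hS : ∀ k m n : ℤ, ‖S k m n‖ ≤ C * min (|(m : ℝ)| ^ μ) (|(n : ℝ)| ^ μ)) (hs : 0 ≤ s)
    (u v : ℤ → ℂ) (k : ℤ) :
    ‖absDeriv s (aHat S u v) k‖ₑ ≤ ENNReal.ofReal (Bconst s * C) *
      (∑' n, ‖absDeriv s u (k - n)‖ₑ * ‖absDeriv μ v n‖ₑ
        + ∑' n, ‖absDeriv μ u (k - n)‖ₑ * ‖absDeriv s v n‖ₑ) := by
  have hB := Bconst_nonneg s
  rw [← ENNReal.tsum_add, ← ENNReal.tsum_mul_left, absDeriv, aHat, ← tsum_const_smul'']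
  refine enorm_tsum_le_tsum_enorm.trans (ENNReal.tsum_le_tsum fun n ↦ ?_)
  simp only [← ofReal_norm, ← ENNReal.ofReal_mul (norm_nonneg _)]
  rw [← ENNReal.ofReal_add (by positivity) (by positivity), ← ENNReal.ofReal_mul (by positivity),
    norm_smul, Real.norm_of_nonneg (by positivity)]
  exact ENNReal.ofReal_le_ofReal (abs_rpow_mul_norm_aHat_term_le hC hS hs u v k n)

lemma eLpNorm_absDeriv_aHat_le (hC : 0 ≤ C)
    (hS : ∀ k m n : ℤ, ‖S k m n‖ ≤ C * min (|(m : ℝ)| ^ μ) (|(n : ℝ)| ^ μ)) (hs : 0 ≤ s)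
    {p : ℝ≥0∞} (hp : 1 ≤ p) (u v : ℤ → ℂ) :
    eLpNorm (absDeriv s (aHat S u v)) p count ≤ ENNReal.ofReal (Bconst s * C) *
      (eLpNorm (absDeriv s u) p count * eLpNorm (absDeriv μ v) 1 count
        + eLpNorm (absDeriv μ u) 1 count * eLpNorm (absDeriv s v) p count) := by
  calc eLpNorm (absDeriv s (aHat S u v)) p count
      ≤ ENNReal.ofReal (Bconst s * C) * eLpNorm
          ((fun k ↦ ∑' n, ‖absDeriv s u (k - n)‖ₑ * ‖absDeriv μ v n‖ₑ)
            + fun k ↦ ∑' n, ‖absDeriv μ u (k - n)‖ₑ * ‖absDeriv s v n‖ₑ) p count :=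
        eLpNorm_le_nnreal_smul_eLpNorm_of_ae_le_mul'
          (.of_forall (enorm_absDeriv_aHat_le hC hS hs u v)) p
    _ ≤ ENNReal.ofReal (Bconst s * C) *
          (eLpNorm (absDeriv s u) p count * eLpNorm (absDeriv μ v) 1 count
            + eLpNorm (absDeriv μ u) 1 count * eLpNorm (absDeriv s v) p count) := by
        grw [eLpNorm_add_le .of_discrete .of_discrete hp,
          eLpNorm_count_convolution_le_mul_one _ _ hp, eLpNorm_count_convolution_le_one_mul _ _ hp]

lemma eLpNorm_two_absDeriv_aHat_le (hC : 0 ≤ C)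
    (hS : ∀ k m n : ℤ, ‖S k m n‖ ≤ C * min (|(m : ℝ)| ^ μ) (|(n : ℝ)| ^ μ)) (hs : 0 ≤ s)
    (hu : u 0 = 0) (hv : v 0 = 0) :
    eLpNorm (absDeriv s (aHat S u v)) 2 count ≤ 2 * ENNReal.ofReal (Bconst s * C)
      * eLpNorm (fun n : ℤ ↦ |(n : ℝ)| ^ (-(s - μ))) 2 count
      * eLpNorm (absDeriv s u) 2 count * eLpNorm (absDeriv s v) 2 count := by
  refine (eLpNorm_absDeriv_aHat_le hC hS hs one_le_two u v).trans ?_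
  grw [eLpNorm_one_absDeriv_le hu s μ, eLpNorm_one_absDeriv_le hv s μ]
  exact le_of_eq (by ring)

end BilinearForm

theorem bilinear_form_bounded_general {μ s C : ℝ} {S : ℤ → ℤ → ℤ → ℂ}
    (hS0 : ∀ m n : ℤ, S 0 m n = 0)
    (hSbound : ∀ k m n : ℤ, ‖S k m n‖ ≤ C * min (|(m : ℝ)| ^ μ) (|(n : ℝ)| ^ μ))
    (hs0 : 0 ≤ s) (hs : μ + 1 / 2 < s) {u v : ℤ → ℂ} (hu0 : u 0 = 0) (hv0 : v 0 = 0)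
    (hu : Summable fun k : ℤ ↦ |(k : ℝ)| ^ (2 * s) * ‖u k‖ ^ 2)
    (hv : Summable fun k : ℤ ↦ |(k : ℝ)| ^ (2 * s) * ‖v k‖ ^ 2) :
    (aHat S u v 0 = 0 ∧
      (Summable fun k : ℤ ↦ |(k : ℝ)| ^ (2 * s) * ‖aHat S u v k‖ ^ 2) ∧
      hnorm s (aHat S u v) ≤ 2 * Bconst s * C * Mconst (s - μ) * hnorm s u * hnorm s v) ∧
    ((∀ k m n : ℤ, S k m n = S k n m) → aHat S u v = aHat S v u) := by
  refine ⟨?_, fun hS ↦ aHat_comm hS u v⟩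
  have hC : 0 ≤ C := (norm_nonneg _).trans (by simpa using hSbound 0 1 1)
  have hσ : 1 / 2 < s - μ := by linarith
  have bound := eLpNorm_two_absDeriv_aHat_le hC hSbound hs0 hu0 hv0
  have bound_ne_top : 2 * ENNReal.ofReal (Bconst s * C)
      * eLpNorm (fun n : ℤ ↦ |(n : ℝ)| ^ (-(s - μ))) 2 count
      * eLpNorm (absDeriv s u) 2 count * eLpNorm (absDeriv s v) 2 count ≠ ∞ := by
    have := (memLp_abs_rpow_neg hσ).eLpNorm_ne_top
    have := (memLp_absDeriv_iff.2 hu).eLpNorm_ne_top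
    have := (memLp_absDeriv_iff.2 hv).eLpNorm_ne_top
    finiteness
  refine ⟨aHat_zero hS0 u v,
    memLp_absDeriv_iff.1 ⟨.of_discrete, bound.trans_lt bound_ne_top.lt_top⟩, ?_⟩
  simpa only [hnorm_eq_toReal_eLpNorm, Mconst_eq_toReal_eLpNorm hσ, ENNReal.toReal_mul,
    ENNReal.toReal_ofNat, ENNReal.toReal_ofReal (mul_nonneg (Bconst_nonneg s) hC),
    mul_assoc] using ENNReal.toReal_mono bound_ne_top bound

/-- The bilinear form `a` is bounded from `Ḣ^s × Ḣ^s` to `Ḣ^s` for `s > μ + 1/2`,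
with `‖a(u,v)‖_s ≤ 2 B_s C M_{s−μ} ‖u‖_s ‖v‖_s`; it is symmetric whenever
`S(k,m,n) = S(k,n,m)`. -/
theorem bilinear_form_bounded
    (μ : ℝ) (hμ : 0 ≤ μ) (S : ℤ → ℤ → ℤ → ℂ)
    (hS0 : ∀ k m n : ℤ, k * m * n = 0 → S k m n = 0)
    (C : ℝ) (hC : 0 < C)
    (hSbound : ∀ k m n : ℤ, ‖S k m n‖ ≤
      C * min (|(k : ℝ)| ^ μ) (min (|(m : ℝ)| ^ μ) (|(n : ℝ)| ^ μ)))
    (s : ℝ) (hs : μ + 1 / 2 < s) :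
    (∀ u v : ℤ → ℂ, InHs s u → InHs s v →
      aHat S u v 0 = 0 ∧
      (Summable fun k : ℤ => |(k : ℝ)| ^ (2 * s) * ‖aHat S u v k‖ ^ 2) ∧
      hnorm s (aHat S u v) ≤ 2 * Bconst s * C * Mconst (s - μ) * hnorm s u * hnorm s v) ∧
    ((∀ k m n : ℤ, S k m n = S k n m) →
      ∀ u v : ℤ → ℂ, InHs s u → InHs s v → aHat S u v = aHat S v u) := by
  have general (u v : ℤ → ℂ) (hu : InHs s u) (hv : InHs s v) :=
    bilinear_form_bounded_general (C := C) (fun m n ↦ hS0 0 m n (by simp))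
      (fun k m n ↦ (hSbound k m n).trans (mul_le_mul_of_nonneg_left (min_le_right _ _) hC.le))
      (by linarith) hs hu.1 hv.1 hu.2.2 hv.2.2
  exact ⟨fun u v hu hv ↦ (general u v hu hv).1, fun hS u v hu hv ↦ (general u v hu hv).2 hS⟩
end

section
/- Let μ ≥ 0 and let S : ℤ³ → ℂ satisfy S(k,m,n) = 0 whenever kmn = 0, the cyclic symmetry S(k,m,n) = S(m,n,k), and |S(k,m,n)| ≤ C·min{|k|^μ, |m|^μ, |n|^μ} for all k,m,n ∈ ℤ. Let s > μ + 1/2. Then for all u, v, w ∈ Ḣ^s(𝕋), (1/2π) ∫_𝕋 u·a(v,w) dx = (1/2π) ∫_𝕋 v·a(w,u) dx; equivalently, the absolutely convergent double sum Σ_{k,n∈ℤ} S(−k, k−n, n) û(−k) v̂(k−n) ŵ(n) is invariant under cyclic permutation of (u, v, w). -/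
open scoped BigOperators

/-!
The left side is a sum over triads `(-k, k - n, n)`, that is, over triples of frequencies with zero
sum. Rotating triads is a bijection of the index set `ℤ × ℤ`, and the summand is invariant under it
by the symmetry of `S`; it remains to justify Fubini. Bounding `S` by its weight in the last
frequency only, the double series is dominated by
`(∑ |û(k)|) (sup |v̂|) (∑ |n| ^ μ |ŵ(n)|)`, which is finite by the Cauchy–Schwarz inequality because
`∑ |k| ^ (2 * (μ - s))` converges for `s > μ + 1 / 2`.
-/

section Triads

variable {G R : Type*} [AddCommGroup G] [NormedCommRing R]

/-- The summand `S(-k, k - n, n) û(-k) v̂(k - n) ŵ(n)` of the trilinear form `∫ u a(v, w)`. A triad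
of frequencies with zero sum is encoded by the pair `(k, n)` for which it is `(-k, k - n, n)`. -/
def triadTerm (S : G → G → G → R) (u v w : G → R) (p : G × G) : R :=
  S (-p.1) (p.1 - p.2) p.2 * u (-p.1) * v (p.1 - p.2) * w p.2

/-- The rotation `(-k, k - n, n) ↦ (k - n, n, -k)` of triads, in the coordinates `(k, n)`. -/
@[simps]
def triadRotation : G × G ≃ G × G where
  toFun p := (p.2 - p.1, -p.1)
  invFun p := (-p.2, p.1 - p.2)
  left_inv p := by simp
  right_inv p := by simp

lemma triadTerm_triadRotation {S : G → G → G → R}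
    (hScyc : ∀ k m n : G, k + m + n = 0 → S k m n = S m n k) (u v w : G → R) (p : G × G) :
    triadTerm S v w u (triadRotation p) = triadTerm S u v w p := by
  have hrot : S (-p.1) (p.1 - p.2) p.2 = S (p.1 - p.2) p.2 (-p.1) := hScyc _ _ _ (by abel)
  have hmid : p.2 - p.1 + p.1 = p.2 := sub_add_cancel _ _
  simp only [triadTerm, triadRotation_apply, neg_sub, sub_neg_eq_add, hmid, hrot]
  ring

lemma summable_triadTerm [CompleteSpace R] {S : G → G → G → R} {ω : G → ℝ}
    (hS : ∀ k m n : G, k + m + n = 0 → ‖S k m n‖ ≤ ω n) {u v w : G → R} {M : ℝ}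
    (hu : Summable fun k => ‖u k‖) (hv : ∀ k, ‖v k‖ ≤ M)
    (hw : Summable fun n => ω n * ‖w n‖) :
    Summable (triadTerm S u v w) := by
  have hω (n : G) : 0 ≤ ω n := (norm_nonneg _).trans (hS (-n) 0 n (by simp))
  have hu' : Summable fun k => ‖u (-k)‖ := (Equiv.neg G).summable_iff.mpr hu
  have hdom : Summable fun p : G × G => M * (‖u (-p.1)‖ * (ω p.2 * ‖w p.2‖)) :=
    (hu'.mul_of_nonneg hw (fun _ => norm_nonneg _)
      fun n => mul_nonneg (hω n) (norm_nonneg _)).mul_left M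
  refine hdom.of_norm_bounded fun p => ?_
  calc ‖triadTerm S u v w p‖
      ≤ ‖S (-p.1) (p.1 - p.2) p.2‖ * ‖u (-p.1)‖ * ‖v (p.1 - p.2)‖ * ‖w p.2‖ :=
        norm_mul_le_of_le norm_mul₃_le le_rfl
    _ ≤ ω p.2 * ‖u (-p.1)‖ * M * ‖w p.2‖ := by
        have := hω p.2
        gcongr
        exacts [hS _ _ _ (by abel), hv _]
    _ = M * (‖u (-p.1)‖ * (ω p.2 * ‖w p.2‖)) := by ring

end Triads

lemma tsum_mul_aHat {S : ℤ → ℤ → ℤ → ℂ} {u v w : ℤ → ℂ} (h : Summable (triadTerm S u v w)) :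
    ∑' k : ℤ, u (-k) * aHat S v w k = ∑' p : ℤ × ℤ, triadTerm S u v w p := by
  rw [h.tsum_prod]
  simp only [aHat, triadTerm, ← tsum_mul_left]
  exact tsum_congr fun k => tsum_congr fun n => by ring

lemma summable_abs_rpow_mul_norm {E : Type*} [SeminormedAddGroup E] {μ s : ℝ}
    (hs : μ + 1 / 2 < s) {u : ℤ → E}
    (hu : Summable fun k : ℤ => |(k : ℝ)| ^ (2 * s) * ‖u k‖ ^ 2) :
    Summable fun k : ℤ => |(k : ℝ)| ^ μ * ‖u k‖ := by
  have hζ : Summable fun k : ℤ => |(k : ℝ)| ^ (-(2 * (s - μ))) :=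
    Real.summable_abs_int_rpow (by linarith)
  refine (hu.add hζ).of_norm_bounded_eventually ?_
  filter_upwards [Filter.eventually_cofinite_ne 0] with k hk
  have hpos : 0 < |(k : ℝ)| := by positivity
  have hsq (r : ℝ) : |(k : ℝ)| ^ (2 * r) = (|(k : ℝ)| ^ r) ^ 2 := by
    rw [mul_comm, Real.rpow_mul hpos.le, Real.rpow_two]
  have hsplit : |(k : ℝ)| ^ μ = |(k : ℝ)| ^ s * |(k : ℝ)| ^ (μ - s) := by
    rw [← Real.rpow_add hpos, add_sub_cancel]
  set a := |(k : ℝ)| ^ s * ‖u k‖ with ha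
  set b := |(k : ℝ)| ^ (μ - s) with hb
  have hab : 0 ≤ a * b := by positivity
  calc ‖|(k : ℝ)| ^ μ * ‖u k‖‖ = a * b := by
        rw [Real.norm_of_nonneg (by positivity), hsplit, ha]; ring
    _ ≤ a ^ 2 + b ^ 2 := by linarith [two_mul_le_add_sq a b]
    _ = |(k : ℝ)| ^ (2 * s) * ‖u k‖ ^ 2 + |(k : ℝ)| ^ (-(2 * (s - μ))) := by
        rw [ha, hb, mul_pow, ← hsq, ← hsq]; ring_nf

lemma InHs.summable_norm {s : ℝ} (hs : 1 / 2 < s) {u : ℤ → ℂ} (hu : InHs s u) :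
    Summable fun k : ℤ => ‖u k‖ := by
  simpa using summable_abs_rpow_mul_norm (μ := 0) (by simpa using hs) hu.2.2

theorem cyclic_symmetry_general {S : ℤ → ℤ → ℤ → ℂ} {ω : ℤ → ℝ}
    (hScyc : ∀ k m n : ℤ, k + m + n = 0 → S k m n = S m n k)
    (hS : ∀ k m n : ℤ, k + m + n = 0 → ‖S k m n‖ ≤ ω n) {u v w : ℤ → ℂ} {M : ℝ}
    (hu : Summable fun k => ‖u k‖) (hv : ∀ k, ‖v k‖ ≤ M)
    (hw : Summable fun n => ω n * ‖w n‖) :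
    ∑' k : ℤ, u (-k) * aHat S v w k = ∑' k : ℤ, v (-k) * aHat S w u k := by
  have hrot : ∀ p, triadTerm S v w u (triadRotation p) = triadTerm S u v w p :=
    triadTerm_triadRotation hScyc u v w
  have huvw : Summable (triadTerm S u v w) := summable_triadTerm hS hu hv hw
  have hvwu : Summable (triadTerm S v w u) :=
    triadRotation.summable_iff.mp (huvw.congr fun p => (hrot p).symm)
  calc ∑' k : ℤ, u (-k) * aHat S v w k
      = ∑' p : ℤ × ℤ, triadTerm S u v w p := tsum_mul_aHat huvw
    _ = ∑' p : ℤ × ℤ, triadTerm S v w u (triadRotation p) := tsum_congr fun p => (hrot p).symm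
    _ = ∑' p : ℤ × ℤ, triadTerm S v w u p := triadRotation.tsum_eq _
    _ = ∑' k : ℤ, v (-k) * aHat S w u k := (tsum_mul_aHat hvwu).symm

/-- Cyclic symmetry of the trilinear integral:
`(1/2π) ∫ u a(v,w) dx = (1/2π) ∫ v a(w,u) dx`, written in Fourier coefficients as
`Σ_k û(−k) \widehat{a(v,w)}(k) = Σ_k v̂(−k) \widehat{a(w,u)}(k)`. -/
theorem cyclic_symmetry
    (μ : ℝ) (hμ : 0 ≤ μ) (S : ℤ → ℤ → ℤ → ℂ)
    (hS0 : ∀ k m n : ℤ, k * m * n = 0 → S k m n = 0)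
    (hScyc : ∀ k m n : ℤ, S k m n = S m n k)
    (C : ℝ) (hC : 0 < C)
    (hSbound : ∀ k m n : ℤ, ‖S k m n‖ ≤
      C * min (|(k : ℝ)| ^ μ) (min (|(m : ℝ)| ^ μ) (|(n : ℝ)| ^ μ)))
    (s : ℝ) (hs : μ + 1 / 2 < s)
    (u v w : ℤ → ℂ) (hu : InHs s u) (hv : InHs s v) (hw : InHs s w) :
    ∑' k : ℤ, u (-k) * aHat S v w k = ∑' k : ℤ, v (-k) * aHat S w u k := by
  have hSn (k m n : ℤ) : ‖S k m n‖ ≤ C * |(n : ℝ)| ^ μ :=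
    (hSbound k m n).trans (by gcongr; exact (min_le_right _ _).trans (min_le_right _ _))
  have hwμ : Summable fun n : ℤ => C * |(n : ℝ)| ^ μ * ‖w n‖ := by
    simpa only [mul_assoc] using (summable_abs_rpow_mul_norm hs hw.2.2).mul_left C
  exact cyclic_symmetry_general (fun k m n _ => hScyc k m n) (fun k m n _ => hSn k m n)
    (hu.summable_norm (by linarith))
    (fun k => (hv.summable_norm (by linarith)).le_tsum k fun _ _ => norm_nonneg _) hwμ
end
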